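/- arXiv:2402.07064 — 4 statements merged into one kernel-verified Lean document; each statement's English description precedes it below -/
import Mathlib

section
/- Let f be a polynomial in m real variables that is SOS-convex (its Hessian matrix H(v) can be factored as H(v) = P(v)^T P(v) for some s×m matrix P(v) with polynomial entries) and is non-negative on all of ℝ^m. Then f is a Sum-of-Squares polynomial, i.e., f can be written as a finite sum of squares of polynomials. -/
open MvPolynomial Matrix
open scoped BigOperators

noncomputable section

/-- A polynomial is a Sum-of-Squares (SOS) polynomial if it is a finite sum of
squares of polynomials. -/
def IsSOS {m : ℕ} (p : MvPolynomial (Fin m) ℝ) : Prop :=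
  ∃ (J : ℕ) (f : Fin J → MvPolynomial (Fin m) ℝ), p = ∑ j, (f j) ^ 2

/-- The Hessian matrix of a polynomial in `m` variables. -/
def polyHessian {m : ℕ} (f : MvPolynomial (Fin m) ℝ) :
    Matrix (Fin m) (Fin m) (MvPolynomial (Fin m) ℝ) :=
  Matrix.of fun i j => pderiv i (pderiv j f)

/-- A polynomial is SOS-convex if its Hessian `H(v)` factors as `P(v)ᵀ P(v)` for
some `s × m` polynomial matrix `P(v)`. -/
def IsSOSConvex {m : ℕ} (f : MvPolynomial (Fin m) ℝ) : Prop :=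
  ∃ (s : ℕ) (P : Matrix (Fin s) (Fin m) (MvPolynomial (Fin m) ℝ)),
    polyHessian f = Pᵀ * P

theorem isSOS_of_isSumSq {m : ℕ} {p : MvPolynomial (Fin m) ℝ} (h : IsSumSq p) : IsSOS p := by
  induction h with
  | zero => exact ⟨0, Fin.elim0, by simp⟩
  | sq_add a hs ih =>
    obtain ⟨J, g, rfl⟩ := ih
    refine ⟨J + 1, Fin.cons a g, ?_⟩
    rw [Fin.sum_univ_succ]
    simp [sq]

theorem moment_quad (N : ℕ) (y : Fin N → ℝ) :
    ∫ t in (0:ℝ)..1, (1 - t) * (∑ a, y a * t ^ (a : ℕ)) ^ 2 =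
      y ⬝ᵥ ((Matrix.of fun a b : Fin N => ∫ t in (0:ℝ)..1, (1 - t) * t ^ ((a : ℕ) + b)) *ᵥ y) := by
  have h1 : ∀ t : ℝ, (1 - t) * (∑ a, y a * t ^ (a : ℕ)) ^ 2 =
      ∑ a, ∑ b, (y a * y b) * ((1 - t) * t ^ ((a : ℕ) + b)) := by
    intro t
    rw [sq, Finset.sum_mul_sum, Finset.mul_sum]
    refine Finset.sum_congr rfl fun a _ => ?_
    rw [Finset.mul_sum]
    refine Finset.sum_congr rfl fun b _ => ?_
    ring
  simp_rw [h1]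
  rw [intervalIntegral.integral_finsetSum]
  · simp only [dotProduct, mulVec, Matrix.of_apply]
    refine Finset.sum_congr rfl fun a _ => ?_
    rw [intervalIntegral.integral_finsetSum, Finset.mul_sum]
    · refine Finset.sum_congr rfl fun b _ => ?_
      rw [intervalIntegral.integral_const_mul]
      ring
    · intro b _
      exact Continuous.intervalIntegrable (by fun_prop) _ _
  · intro a _
    exact Continuous.intervalIntegrable (by fun_prop) _ _

open scoped MatrixOrder ComplexOrder in
theorem moment_sq (N : ℕ) : ∃ B : Matrix (Fin N) (Fin N) ℝ, ∀ y : Fin N → ℝ,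
    ∫ t in (0:ℝ)..1, (1 - t) * (∑ a, y a * t ^ (a : ℕ)) ^ 2 = ∑ j, (∑ a, B j a * y a) ^ 2 := by
  set M : Matrix (Fin N) (Fin N) ℝ :=
    Matrix.of fun a b : Fin N => ∫ t in (0:ℝ)..1, (1 - t) * t ^ ((a : ℕ) + b) with hM
  have hpsd : M.PosSemidef := by
    refine .of_dotProduct_mulVec_nonneg ?_ fun y => ?_
    · ext a b
      simp [hM, add_comm]
    · have := moment_quad N y
      rw [← hM] at this
      simp only [star_trivial]
      rw [← this]
      refine intervalIntegral.integral_nonneg (by norm_num) fun t ht => ?_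
      have := ht.2
      exact mul_nonneg (by linarith) (sq_nonneg _)
  obtain ⟨B, hB⟩ := CStarAlgebra.nonneg_iff_eq_star_mul_self.mp hpsd.nonneg
  refine ⟨B, fun y => ?_⟩
  rw [moment_quad, ← hM, hB, ← Matrix.mulVec_mulVec, star_eq_conjTranspose,
    conjTranspose_eq_transpose_of_trivial, dotProduct_mulVec, vecMul_transpose]
  simp [dotProduct, mulVec, sq]

theorem integral_sumSq {m : ℕ} (q : Polynomial (MvPolynomial (Fin m) ℝ)) :
    ∃ g : MvPolynomial (Fin m) ℝ, IsSumSq g ∧ ∀ x : Fin m → ℝ,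
      eval x g = ∫ t in (0:ℝ)..1, (1 - t) * ((q.map (eval x)).eval t) ^ 2 := by
  obtain ⟨B, hB⟩ := moment_sq (q.natDegree + 1)
  refine ⟨∑ j, (∑ a : Fin (q.natDegree + 1), C (B j a) * q.coeff a) ^ 2,
    IsSumSq.sum_sq _ _, fun x => ?_⟩
  have h := hB (fun a => eval x (q.coeff a))
  simp only [map_sum, map_pow, map_mul, eval_C]
  rw [← h]
  congr 1
  ext t
  congr 2
  rw [Polynomial.eval_eq_sum_range' (n := q.natDegree + 1)
    (Nat.lt_succ_of_le Polynomial.natDegree_map_le), Finset.sum_range]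
  simp

theorem hasDerivAt_line {m : ℕ} (f : MvPolynomial (Fin m) ℝ) (u d : Fin m → ℝ) (t : ℝ) :
    HasDerivAt (fun t : ℝ => eval (u + t • d) f)
      (∑ i, d i * eval (u + t • d) (pderiv i f)) t := by
  induction f using MvPolynomial.induction_on with
  | C a => simpa using hasDerivAt_const t a
  | add p q hp hq =>
    have := hp.add hq
    simp only [map_add, mul_add, Finset.sum_add_distrib]
    exact this
  | mul_X p j hp =>
    have hX : HasDerivAt (fun t : ℝ => u j + t * d j) (d j) t := by
      simpa using ((hasDerivAt_id t).mul_const (d j)).const_add (u j)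
    have hfun : (fun t : ℝ => eval (u + t • d) (p * X j)) =
        fun t : ℝ => eval (u + t • d) p * (u j + t * d j) := by
      funext t; simp
    rw [hfun]
    refine (HasDerivAt.fun_mul hp hX).congr_deriv ?_
    have hterm : ∀ i, d i * eval (u + t • d) (pderiv i (p * X j)) =
        d i * eval (u + t • d) (pderiv i p) * (u j + t * d j) +
          (if i = j then eval (u + t • d) p * d j else 0) := by
      intro i
      by_cases hij : i = j
      · subst hij
        simp [Derivation.leibniz]
        ring
      · simp [Derivation.leibniz, pderiv_X_of_ne (Ne.symm hij), hij]
        ring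
    simp_rw [hterm]
    rw [Finset.sum_add_distrib, Finset.sum_mul]
    simp

theorem continuous_line {m : ℕ} (f : MvPolynomial (Fin m) ℝ) (u d : Fin m → ℝ) :
    Continuous (fun t : ℝ => eval (u + t • d) f) :=
  continuous_iff_continuousAt.2 fun t => (hasDerivAt_line f u d t).continuousAt

theorem taylor_line {m : ℕ} (f : MvPolynomial (Fin m) ℝ) (u d : Fin m → ℝ) :
    eval (u + d) f = eval u f + ∑ i, d i * eval u (pderiv i f) +
      ∫ t in (0:ℝ)..1, (1 - t) *
        ∑ i, d i * ∑ j, d j * eval (u + t • d) (pderiv j (pderiv i f)) := by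
  have hd : ∀ t ∈ Set.uIcc (0:ℝ) 1, HasDerivAt
      (fun t : ℝ => (1 - t) * (∑ i, d i * eval (u + t • d) (pderiv i f)) + eval (u + t • d) f)
      ((1 - t) * ∑ i, d i * ∑ j, d j * eval (u + t • d) (pderiv j (pderiv i f))) t := by
    intro t _
    have h0 := hasDerivAt_line f u d t
    have h1 : HasDerivAt (fun t : ℝ => ∑ i, d i * eval (u + t • d) (pderiv i f))
        (∑ i, d i * ∑ j, d j * eval (u + t • d) (pderiv j (pderiv i f))) t :=
      HasDerivAt.fun_sum fun i _ => (hasDerivAt_line (pderiv i f) u d t).const_mul (d i)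
    have h2 : HasDerivAt (fun t : ℝ => 1 - t) (-1) t := by
      simpa using (hasDerivAt_id t).const_sub 1
    refine (HasDerivAt.fun_add (HasDerivAt.fun_mul h2 h1) h0).congr_deriv ?_
    ring
  rw [intervalIntegral.integral_eq_sub_of_hasDerivAt hd]
  · simp
    ring
  · refine Continuous.intervalIntegrable ?_ _ _
    refine (continuous_const.sub continuous_id).mul ?_
    refine continuous_finsetSum _ fun i _ => continuous_const.mul ?_
    exact continuous_finsetSum _ fun j _ => continuous_const.mul (continuous_line _ _ _)

theorem taylor_sos {m : ℕ} (f : MvPolynomial (Fin m) ℝ) (hconv : IsSOSConvex f)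
    (u : Fin m → ℝ) : ∃ g : MvPolynomial (Fin m) ℝ, IsSumSq g ∧ ∀ x : Fin m → ℝ,
      eval x f = eval u f + ∑ i, (x i - u i) * eval u (pderiv i f) + eval x g := by
  obtain ⟨s, P, hP⟩ := hconv
  let q : Fin s → Polynomial (MvPolynomial (Fin m) ℝ) := fun k =>
    ∑ i, Polynomial.C (X i - C (u i)) *
      eval₂Hom (Polynomial.C.comp C)
        (fun j => Polynomial.C (C (u j)) + Polynomial.X * Polynomial.C (X j - C (u j))) (P k i)
  have hq : ∀ k x t, ((q k).map (eval x)).eval t =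
      ∑ i, (x i - u i) * eval (u + t • (x - u)) (P k i) := by
    intro k x t
    have key : ∀ p : MvPolynomial (Fin m) ℝ, ((eval₂Hom (Polynomial.C.comp C)
        (fun j => Polynomial.C (C (u j)) + Polynomial.X * Polynomial.C (X j - C (u j)))
          p).map (eval x)).eval t = eval (u + t • (x - u)) p := by
      intro p
      induction p using MvPolynomial.induction_on with
      | C a => simp
      | add p q hp hq => rw [map_add, Polynomial.map_add, Polynomial.eval_add, hp, hq, map_add]
      | mul_X p j hp =>
        rw [map_mul, Polynomial.map_mul, Polynomial.eval_mul, hp, map_mul]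
        simp
    simp only [q, Polynomial.map_sum, Polynomial.map_mul, Polynomial.eval_finsetSum,
      Polynomial.eval_mul, key]
    simp
  choose g hg hgx using fun k => integral_sumSq (q k)
  refine ⟨∑ k, g k, IsSumSq.sum fun k _ => hg k, fun x => ?_⟩
  have ht := taylor_line f u (x - u)
  rw [add_sub_cancel] at ht
  rw [ht, map_sum]
  simp only [Pi.sub_apply, hgx]
  congr 1
  rw [← intervalIntegral.integral_finsetSum]
  · congr 1
    ext t
    rw [← Finset.mul_sum]
    congr 1
    have hh : ∀ i j, pderiv j (pderiv i f) = ∑ k, P k j * P k i := by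
      intro i j
      have := congrFun (congrFun hP j) i
      simpa [polyHessian, Matrix.mul_apply] using this
    simp only [hq, hh, map_sum, map_mul, sq, Finset.mul_sum, Finset.sum_mul]
    conv_rhs => rw [Finset.sum_comm]
    refine Finset.sum_congr rfl fun j _ => ?_
    conv_rhs => rw [Finset.sum_comm]
    refine Finset.sum_congr rfl fun i _ => ?_
    refine Finset.sum_congr rfl fun k _ => ?_
    ring
  · intro k _
    exact Continuous.intervalIntegrable (by fun_prop) _ _

theorem IsSumSq_eval_nonneg {m : ℕ} {g : MvPolynomial (Fin m) ℝ} (hg : IsSumSq g)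
    (x : Fin m → ℝ) : 0 ≤ eval x g := by
  induction hg with
  | zero => simp
  | sq_add a hs ih =>
    simp only [map_add, map_mul]
    nlinarith [mul_self_nonneg (eval x a)]

theorem convexOn_eval {m : ℕ} (f : MvPolynomial (Fin m) ℝ) (hconv : IsSOSConvex f) :
    ConvexOn ℝ Set.univ (fun x => eval x f) := by
  refine ⟨convex_univ, fun x _ y _ a b ha hb hab => ?_⟩
  obtain ⟨g, hg, h⟩ := taylor_sos f hconv (a • x + b • y)
  have hx := h x
  have hy := h y
  have hgx := IsSumSq_eval_nonneg hg x
  have hgy := IsSumSq_eval_nonneg hg y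
  set z := a • x + b • y with hz
  have hl : a * ∑ i, (x i - z i) * eval z (pderiv i f) +
      b * ∑ i, (y i - z i) * eval z (pderiv i f) = 0 := by
    rw [Finset.mul_sum, Finset.mul_sum, ← Finset.sum_add_distrib]
    refine Finset.sum_eq_zero fun i _ => ?_
    have : z i = a * x i + b * y i := by simp [hz]
    have hb' : b = 1 - a := by linarith
    rw [this, hb']
    ring
  simp only [smul_eq_mul]
  rw [hx, hy]
  have e : eval z f = a * eval z f + b * eval z f := by rw [← add_mul, hab, one_mul]
  nlinarith [mul_nonneg ha hgx, mul_nonneg hb hgy]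

theorem const_line {m : ℕ} (f : MvPolynomial (Fin m) ℝ) (hnn : ∀ v : Fin m → ℝ, 0 ≤ eval v f)
    (x d : Fin m → ℝ) (h : ∀ t : ℝ, 0 ≤ t → eval (x + t • d) f ≤ eval x f) (t : ℝ) :
    eval (x + t • d) f = eval x f := by
  let p : Polynomial ℝ :=
    aeval (fun i => Polynomial.C (x i) + Polynomial.X * Polynomial.C (d i)) f
  have hp : ∀ t, p.eval t = eval (x + t • d) f := by
    intro t
    simp only [p]
    clear h hnn p
    induction f using MvPolynomial.induction_on with
    | C a => simp
    | add p q hp hq => rw [map_add, Polynomial.eval_add, hp, hq, map_add]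
    | mul_X p j hp =>
      rw [map_mul, Polynomial.eval_mul, hp, map_mul]
      simp
      left
      ring
  have hdeg : p.degree ≤ 0 := by
    rw [← Polynomial.isBoundedUnder_abs_atTop_iff]
    refine ⟨eval x f, ?_⟩
    rw [Filter.eventually_map]
    filter_upwards [Filter.eventually_ge_atTop 0] with t ht
    rw [hp, abs_of_nonneg (hnn _)]
    exact h t ht
  have hc := Polynomial.eq_C_of_degree_le_zero hdeg
  have h0 := hp 0
  rw [← hp t]
  rw [hc] at h0 ⊢
  simpa using h0

theorem exists_minimizer {m : ℕ} (f : MvPolynomial (Fin m) ℝ)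
    (hc : ConvexOn ℝ Set.univ (fun x : Fin m → ℝ => eval x f))
    (hnn : ∀ v : Fin m → ℝ, 0 ≤ eval v f) :
    ∃ u : Fin m → ℝ, ∀ x, eval u f ≤ eval x f := by
  have hcont : Continuous (fun x : Fin m → ℝ => eval x f) := f.continuous_eval
  let L : Submodule ℝ (Fin m → ℝ) :=
    { carrier := {d | ∀ (x : Fin m → ℝ) (t : ℝ), eval (x + t • d) f = eval x f}
      zero_mem' := by intro x t; simp
      add_mem' := by
        intro d e hd he x t
        rw [smul_add, ← add_assoc, he, hd]
      smul_mem' := by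
        intro c d hd x t
        rw [smul_smul, hd] }
  obtain ⟨W, hW⟩ := Submodule.exists_isCompl L
  have hWc : IsClosed (W : Set (Fin m → ℝ)) := W.closed_of_finiteDimensional
  set a := eval (0 : Fin m → ℝ) f with ha
  let S : Set (Fin m → ℝ) := {w | w ∈ W ∧ eval w f ≤ a}
  have hSc : IsClosed S := hWc.inter (isClosed_le hcont continuous_const)
  have hSb : Bornology.IsBounded S := by
    by_contra hb
    have hex : ∀ n : ℕ, ∃ w ∈ S, (n : ℝ) + 1 < ‖w‖ := by
      intro n
      by_contra! hcon
      exact hb (isBounded_iff_forall_norm_le.2 ⟨_, hcon⟩)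
    choose w hwS hwn using hex
    have hpos : ∀ n, 0 < ‖w n‖ := fun n => lt_trans (by positivity) (hwn n)
    have hsph : ∀ n, ‖w n‖⁻¹ • w n ∈ Metric.sphere (0 : Fin m → ℝ) 1 := by
      intro n
      simp [norm_smul, (hpos n).ne']
    obtain ⟨d, hd, φ, hφ, hlim⟩ := (isCompact_sphere (0 : Fin m → ℝ) 1).tendsto_subseq hsph
    have hnorm : Filter.Tendsto (fun n => ‖w n‖) Filter.atTop Filter.atTop :=
      Filter.tendsto_atTop_mono (fun n => by linarith [hwn n]) tendsto_natCast_atTop_atTop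
    have hinv : Filter.Tendsto (fun n => ‖w (φ n)‖⁻¹) Filter.atTop (nhds 0) :=
      (hnorm.comp hφ.tendsto_atTop).inv_tendsto_atTop
    have hdW : d ∈ W := hWc.mem_of_tendsto hlim
      (Filter.Eventually.of_forall fun n => W.smul_mem _ (hwS _).1)
    have hdL : d ∈ L := by
      intro x t
      refine const_line f hnn x d (fun t ht => ?_) t
      have h1 : Filter.Tendsto (fun n => eval ((1 - t * ‖w (φ n)‖⁻¹) • x +
          (t * ‖w (φ n)‖⁻¹) • w (φ n)) f) Filter.atTop (nhds (eval (x + t • d) f)) := by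
        refine (hcont.tendsto _).comp ?_
        have h2 : Filter.Tendsto (fun n => (1 - t * ‖w (φ n)‖⁻¹) • x) Filter.atTop
            (nhds ((1 - t * 0) • x)) :=
          ((hinv.const_mul t).const_sub 1).smul_const x
        have h3 := hlim.const_smul t
        have h4 := h2.add h3
        simp only [mul_zero, sub_zero, one_smul] at h4
        simpa [smul_smul] using h4
      have h2 : Filter.Tendsto (fun n => (1 - t * ‖w (φ n)‖⁻¹) * eval x f +
          (t * ‖w (φ n)‖⁻¹) * a) Filter.atTop (nhds (eval x f)) := by
        have := (((hinv.const_mul t).const_sub 1).mul_const (eval x f)).add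
          ((hinv.const_mul t).mul_const a)
        simpa using this
      refine le_of_tendsto_of_tendsto h1 h2 ?_
      have hev : ∀ᶠ n in Filter.atTop, t * ‖w (φ n)‖⁻¹ < 1 :=
        (hinv.const_mul t).eventually_lt_const (by simp)
      filter_upwards [hev] with n hn
      have hk : 0 ≤ t * ‖w (φ n)‖⁻¹ := by positivity
      have := hc.2 (Set.mem_univ x) (Set.mem_univ (w (φ n)))
        (by linarith : 0 ≤ 1 - t * ‖w (φ n)‖⁻¹) hk (by ring)
      simp only [smul_eq_mul] at this
      refine this.trans ?_
      have := mul_le_mul_of_nonneg_left (hwS (φ n)).2 hk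
      linarith
    have h0 : d = 0 := by
      have : d ∈ L ⊓ W := ⟨hdL, hdW⟩
      rw [hW.inf_eq_bot] at this
      simpa using this
    rw [h0] at hd
    simp at hd
  have hScomp : IsCompact S := Metric.isCompact_of_isClosed_isBounded hSc hSb
  obtain ⟨u, huS, hu⟩ := hScomp.exists_isMinOn ⟨0, W.zero_mem, le_rfl⟩ hcont.continuousOn
  refine ⟨u, fun x => ?_⟩
  have hx : x ∈ L ⊔ W := by rw [hW.sup_eq_top]; trivial
  obtain ⟨l, hl, z, hz, rfl⟩ := Submodule.mem_sup.1 hx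
  have h1 : eval (l + z) f = eval z f := by
    have := hl z 1
    rwa [one_smul, add_comm] at this
  rw [h1]
  by_cases hza : eval z f ≤ a
  · exact hu ⟨hz, hza⟩
  · exact huS.2.trans (le_of_not_ge hza)

/-- A non-negative SOS-convex polynomial is an SOS polynomial. -/
theorem nonneg_sosConvex_is_sos {m : ℕ} (f : MvPolynomial (Fin m) ℝ)
    (hconv : IsSOSConvex f) (hnn : ∀ v : Fin m → ℝ, 0 ≤ eval v f) :
    IsSOS f := by
  obtain ⟨u, hu⟩ := exists_minimizer f (convexOn_eval f hconv) hnn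
  obtain ⟨g, hg, h⟩ := taylor_sos f hconv u
  have hgrad : ∀ i, eval u (pderiv i f) = 0 := by
    intro i
    have hd := hasDerivAt_line f u (Pi.single i 1) 0
    have hmin : IsLocalMin (fun t : ℝ => eval (u + t • (Pi.single i 1 : Fin m → ℝ)) f) 0 :=
      Filter.Eventually.of_forall fun t => by simpa using hu _
    have := hmin.hasDerivAt_eq_zero hd
    simpa [Pi.single_apply] using this
  apply isSOS_of_isSumSq
  have hf : f = C (Real.sqrt (eval u f)) * C (Real.sqrt (eval u f)) + g := by
    apply MvPolynomial.funext
    intro x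
    rw [h x]
    simp [hgrad, Real.mul_self_sqrt (hnn u)]
  rw [hf]
  exact IsSumSq.sq_add _ hg

end
end

section
/- Let Ω = {v ∈ ℝ^m : ∃ ξ ∈ ℝ^N, F_0 + Σ_{i=1}^m v_i F_i + Σ_{t=1}^N ξ_t M_t ⪰ 0} for symmetric ν×ν real matrices F_0,…,F_m, M_1,…,M_N, and let g_ℓ^k, ℓ=1,…,L, k=1,…,r, be SOS-convex polynomials on ℝ^m. Assume Ω is compact and there exist v̄ ∈ ℝ^m and ξ̄ ∈ ℝ^N with F_0 + Σ_i v̄_i F_i + Σ_t ξ̄_t M_t ≻ 0 (positive definite). Then the following are equivalent: (i) min_{k=1,…,r} max_{ℓ=1,…,L} g_ℓ^k(v) ≥ 0 for all v ∈ Ω; (ii) for each k=1,…,r there exist a positive semi-definite ν×ν matrix Z_k and δ^k = (δ_1^k,…,δ_L^k) in the simplex Δ = {δ ∈ ℝ_+^L : Σ_ℓ δ_ℓ = 1} such that Σ_{ℓ=1}^L δ_ℓ^k g_ℓ^k(v) − tr(Z_k F_0) − Σ_{i=1}^m v_i tr(Z_k F_i) is an SOS polynomial of degree at most d, and tr(Z_k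 M_t) = 0 for all t=1,…,N, where d is the smallest even integer larger than max_{k,ℓ} deg g_ℓ^k. -/
open MvPolynomial Matrix
open scoped BigOperators

noncomputable section

/-- SOS polynomial of degree at most `d` (membership in `Σ_d^2(v)`). -/
def IsSOSDeg {m : ℕ} (d : ℕ) (p : MvPolynomial (Fin m) ℝ) : Prop :=
  IsSOS p ∧ p.totalDegree ≤ d

/-- The projected spectrahedron
`Ω = {v : ∃ ξ, F₀ + Σᵢ vᵢ Fᵢ + Σₜ ξₜ Mₜ ⪰ 0}`. -/
def projSpec {m N ν : ℕ} (F0 : Matrix (Fin ν) (Fin ν) ℝ)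
    (F : Fin m → Matrix (Fin ν) (Fin ν) ℝ)
    (M : Fin N → Matrix (Fin ν) (Fin ν) ℝ) : Set (Fin m → ℝ) :=
  {v | ∃ ξ : Fin N → ℝ, (F0 + ∑ i, v i • F i + ∑ t, ξ t • M t).PosSemidef}

/-- The piecewise function `v ↦ min_{k} max_{ℓ} g_ℓ^k(v)`. -/
def pwMinMax {m r L : ℕ} [NeZero r] [NeZero L]
    (g : Fin r → Fin L → MvPolynomial (Fin m) ℝ) (v : Fin m → ℝ) : ℝ :=
  Finset.univ.inf' Finset.univ_nonempty fun k =>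
    Finset.univ.sup' Finset.univ_nonempty fun ℓ => eval v (g k ℓ)

/-! ### Sums of squares -/

lemma isSOS_zero {m : ℕ} : IsSOS (0 : MvPolynomial (Fin m) ℝ) :=
  ⟨0, fun _ => 0, by simp⟩

lemma isSOS_sq {m : ℕ} (q : MvPolynomial (Fin m) ℝ) : IsSOS (q ^ 2) :=
  ⟨1, fun _ => q, by simp⟩

lemma IsSOS.add' {m : ℕ} {p q : MvPolynomial (Fin m) ℝ} (hp : IsSOS p) (hq : IsSOS q) :
    IsSOS (p + q) := by
  obtain ⟨J, f, rfl⟩ := hp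
  obtain ⟨K, h, rfl⟩ := hq
  refine ⟨J + K, Fin.append f h, ?_⟩
  simp [Fin.sum_univ_add]

lemma isSOS_sum {m : ℕ} {ι : Type*} (s : Finset ι) (p : ι → MvPolynomial (Fin m) ℝ)
    (hp : ∀ i ∈ s, IsSOS (p i)) : IsSOS (∑ i ∈ s, p i) := by
  classical
  induction s using Finset.induction_on with
  | empty => simpa using isSOS_zero
  | insert a s ha ih =>
    rw [Finset.sum_insert ha]
    exact (hp a (by simp)).add' (ih fun i hi => hp i (by simp [hi]))

lemma IsSOS.C_mul' {m : ℕ} {p : MvPolynomial (Fin m) ℝ} (hp : IsSOS p) {c : ℝ} (hc : 0 ≤ c) :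
    IsSOS (C c * p) := by
  obtain ⟨J, f, rfl⟩ := hp
  refine ⟨J, fun j => C (Real.sqrt c) * f j, ?_⟩
  simp only [mul_pow, Finset.mul_sum, ← C_pow, Real.sq_sqrt hc]

lemma isSOS_C {m : ℕ} {c : ℝ} (hc : 0 ≤ c) : IsSOS (C c : MvPolynomial (Fin m) ℝ) := by
  have := (isSOS_sq (1 : MvPolynomial (Fin m) ℝ)).C_mul' hc
  simpa using this

lemma IsSOS.eval_nonneg {m : ℕ} {p : MvPolynomial (Fin m) ℝ} (hp : IsSOS p) (v : Fin m → ℝ) :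
    0 ≤ eval v p := by
  obtain ⟨J, f, rfl⟩ := hp
  rw [map_sum]
  exact Finset.sum_nonneg fun j _ => by rw [map_pow]; positivity

lemma IsSOS.map_algHom {m : ℕ} {p : MvPolynomial (Fin m) ℝ} (hp : IsSOS p)
    (T : MvPolynomial (Fin m) ℝ →ₐ[ℝ] MvPolynomial (Fin m) ℝ) : IsSOS (T p) := by
  obtain ⟨J, f, rfl⟩ := hp
  exact ⟨J, fun j => T (f j), by simp⟩

open scoped MatrixOrder in
lemma isSOS_of_posSemidef {m D : ℕ} {c : Matrix (Fin D) (Fin D) ℝ} (hc : c.PosSemidef)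
    (f : Fin D → MvPolynomial (Fin m) ℝ) :
    IsSOS (∑ k, ∑ l, C (c k l) * (f k * f l)) := by
  obtain ⟨B, rfl⟩ := CStarAlgebra.nonneg_iff_eq_star_mul_self.mp hc.nonneg
  refine ⟨D, fun i => ∑ k, C (B i k) * f k, ?_⟩
  simp only [Matrix.mul_apply, star_apply, star_trivial, map_sum, Finset.sum_mul, sq,
    Finset.mul_sum, C_mul]
  rw [Finset.sum_comm]
  simp_rw [fun a => Finset.sum_comm (s := Finset.univ) (t := Finset.univ)
    (f := fun (x : Fin D) (i : Fin D) => C (B i x) * C (B i a) * (f x * f a))]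
  rw [Finset.sum_comm]
  refine Finset.sum_congr rfl fun i _ => Finset.sum_congr rfl fun k _ =>
    Finset.sum_congr rfl fun l _ => ?_
  ring

/-- the weights `1/(n(n-1))`. -/
def wgt (n : ℕ) : ℝ := 1 / ((n : ℝ) * ((n : ℝ) - 1))

lemma wgt_integral (n : ℕ) : wgt (n + 2) = ∫ s in (0 : ℝ)..1, (1 - s) * s ^ n := by
  have h : ∀ s : ℝ, (1 - s) * s ^ n = s ^ n - s ^ (n + 1) := fun s => by ring
  simp_rw [h]
  rw [intervalIntegral.integral_sub (by simp) (by simp), integral_pow, integral_pow]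
  unfold wgt
  push_cast
  have h1 : (n : ℝ) + 1 ≠ 0 := by positivity
  have h2 : (n : ℝ) + 2 ≠ 0 := by positivity
  have h3 : (n : ℝ) + 1 + 1 ≠ 0 := by positivity
  have h4 : (n : ℝ) + 2 - 1 ≠ 0 := by
    have : (n : ℝ) + 2 - 1 = n + 1 := by ring
    rwa [this]
  simp
  field_simp
  ring

lemma wgt_posSemidef (D : ℕ) :
    (Matrix.of fun k l : Fin D => wgt (k + l + 2)).PosSemidef := by
  refine Matrix.PosSemidef.of_dotProduct_mulVec_nonneg ?_ ?_
  · ext k l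
    simp [Matrix.conjTranspose_apply, add_comm (k : ℕ)]
  · intro x
    have : star x ⬝ᵥ ((Matrix.of fun k l : Fin D => wgt (k + l + 2)) *ᵥ x)
        = ∫ s in (0 : ℝ)..1, (1 - s) * (∑ k : Fin D, x k * s ^ (k : ℕ)) ^ 2 := by
      have h : ∀ s : ℝ, (1 - s) * (∑ k : Fin D, x k * s ^ (k : ℕ)) ^ 2
          = ∑ k : Fin D, ∑ l : Fin D, (x k * x l) * ((1 - s) * s ^ ((k : ℕ) + l)) := by
        intro s
        rw [sq, Finset.sum_mul_sum, Finset.mul_sum]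
        refine Finset.sum_congr rfl fun k _ => ?_
        rw [Finset.mul_sum]
        refine Finset.sum_congr rfl fun l _ => ?_
        ring
      simp_rw [h]
      rw [intervalIntegral.integral_finsetSum]
      · simp only [dotProduct, mulVec, star_trivial, Matrix.of_apply]
        refine Finset.sum_congr rfl fun k _ => ?_
        rw [intervalIntegral.integral_finsetSum]
        · rw [Finset.mul_sum]
          refine Finset.sum_congr rfl fun l _ => ?_
          rw [intervalIntegral.integral_const_mul, ← wgt_integral]
          ring
        · intro l _
          exact (by fun_prop : Continuous _).intervalIntegrable _ _
      · intro k _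
        exact (by fun_prop : Continuous _).intervalIntegrable _ _
    rw [this]
    refine intervalIntegral.integral_nonneg zero_le_one fun s hs => ?_
    have := hs.2
    have : 0 ≤ 1 - s := by linarith
    positivity

/-! ### Second order Euler operator -/

/-- `p ↦ xᵀ ∇²p(x) x`. -/
def eulerTwo (m : ℕ) : MvPolynomial (Fin m) ℝ →ₗ[ℝ] MvPolynomial (Fin m) ℝ where
  toFun p := ∑ i, ∑ j, X i * X j * pderiv i (pderiv j p)
  map_add' p q := by simp [mul_add, Finset.sum_add_distrib]
  map_smul' c p := by simp [Finset.smul_sum]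

/-- multiply the component of degree `n` by `wgt n`. -/
def wgtMap (m N : ℕ) : MvPolynomial (Fin m) ℝ →ₗ[ℝ] MvPolynomial (Fin m) ℝ :=
  ∑ n ∈ Finset.range N, wgt n • homogeneousComponent n

lemma wgtMap_hom {m N n : ℕ} {h : MvPolynomial (Fin m) ℝ} (hh : h.IsHomogeneous n) (hn : n < N) :
    wgtMap m N h = wgt n • h := by
  unfold wgtMap
  rw [LinearMap.sum_apply, Finset.sum_eq_single n]
  · simp [homogeneousComponent_eq_self hh]
  · intro b _ hb
    rw [LinearMap.smul_apply, homogeneousComponent_of_mem (n := n) hh, if_neg hb, smul_zero]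
  · intro h'
    exact absurd (Finset.mem_range.2 hn) h'

lemma eulerTwo_hom {m n : ℕ} {h : MvPolynomial (Fin m) ℝ} (hh : h.IsHomogeneous n) :
    eulerTwo m h = ((n : ℝ) * ((n : ℝ) - 1)) • h := by
  have h1 : eulerTwo m h = ∑ j, X j * ∑ i, X i * pderiv i (pderiv j h) := by
    show ∑ i, ∑ j, X i * X j * pderiv i (pderiv j h) = _
    rw [Finset.sum_comm]
    refine Finset.sum_congr rfl fun j _ => ?_
    rw [Finset.mul_sum]
    refine Finset.sum_congr rfl fun i _ => ?_
    ring
  rw [h1]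
  have h2 : ∀ j, ∑ i, X i * pderiv i (pderiv j h) = (n - 1) • pderiv j h := fun j =>
    (hh.pderiv (i := j)).sum_X_mul_pderiv
  simp_rw [h2, mul_smul_comm]
  rw [← Finset.smul_sum, hh.sum_X_mul_pderiv]
  rcases n with _ | n
  · simp
  · rw [← Nat.cast_smul_eq_nsmul ℝ, ← Nat.cast_smul_eq_nsmul ℝ, smul_smul]
    congr 1
    push_cast
    ring

lemma sum_homogeneousComponent' {m N : ℕ} (p : MvPolynomial (Fin m) ℝ) (hN : p.totalDegree < N) :
    ∑ n ∈ Finset.range N, homogeneousComponent n p = p := by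
  conv_rhs => rw [← sum_homogeneousComponent p]
  symm
  refine Finset.sum_subset (fun i hi => ?_) fun i _ hi => ?_
  · simp at hi ⊢; omega
  · apply homogeneousComponent_eq_zero
    simp at hi; omega

lemma decomp_zero {m : ℕ} {p : MvPolynomial (Fin m) ℝ} (hp : IsSOSConvex p) :
    ∃ q σ : MvPolynomial (Fin m) ℝ, q.IsHomogeneous 1 ∧ IsSOS σ ∧ p = C (eval 0 p) + q + σ := by
  obtain ⟨s, P, hP⟩ := hp
  set f : Fin s → MvPolynomial (Fin m) ℝ := fun a => ∑ i, P a i * X i with hf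
  have hΦ : eulerTwo m p = ∑ a, f a ^ 2 := by
    show ∑ i, ∑ j, X i * X j * pderiv i (pderiv j p) = _
    have h1 : ∀ i j, pderiv i (pderiv j p) = ∑ a, P a i * P a j := by
      intro i j
      have := congrFun (congrFun hP i) j
      simpa [polyHessian, Matrix.mul_apply] using this
    simp_rw [h1, hf, sq, Finset.sum_mul_sum, Finset.mul_sum]
    symm
    rw [Finset.sum_comm]
    refine Finset.sum_congr rfl fun i _ => ?_
    rw [Finset.sum_comm]
    refine Finset.sum_congr rfl fun j _ => Finset.sum_congr rfl fun a _ => ?_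
    ring
  have hf0 : ∀ a, homogeneousComponent 0 (f a) = 0 := by
    intro a
    rw [homogeneousComponent_zero, ← constantCoeff_eq]
    simp [hf]
  obtain ⟨D, hD1, hD2⟩ : ∃ D : ℕ, p.totalDegree < 2 * D + 2 ∧ ∀ a, (f a).totalDegree < D + 1 := by
    refine ⟨p.totalDegree + ∑ a, (f a).totalDegree, by omega, fun a => ?_⟩
    have := Finset.single_le_sum (f := fun a => (f a).totalDegree)
      (fun _ _ => Nat.zero_le _) (Finset.mem_univ a)
    omega
  set N := 2 * D + 2
  have hfk : ∀ a, f a = ∑ k : Fin D, homogeneousComponent (k + 1) (f a) := by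
    intro a
    conv_lhs => rw [← sum_homogeneousComponent' (f a) (hD2 a)]
    rw [Finset.sum_range_succ', hf0, add_zero, Finset.sum_range]
  have hL : wgtMap m N (eulerTwo m p) =
      ∑ n ∈ Finset.range (2 * D), homogeneousComponent (n + 2) p := by
    conv_lhs => rw [← sum_homogeneousComponent' p hD1]
    rw [map_sum, map_sum]
    have h1 : ∀ n ∈ Finset.range N, wgtMap m N (eulerTwo m (homogeneousComponent n p))
        = (wgt n * ((n : ℝ) * ((n : ℝ) - 1))) • homogeneousComponent n p := by
      intro n hn
      have hh := homogeneousComponent_isHomogeneous n p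
      rw [eulerTwo_hom hh, map_smul, wgtMap_hom hh (Finset.mem_range.1 hn), smul_smul, mul_comm]
    rw [Finset.sum_congr rfl h1, Finset.sum_range_succ', Finset.sum_range_succ']
    simp only [wgt]
    simp
    refine Finset.sum_congr rfl fun n _ => ?_
    have h2 : ((n : ℝ) + 1) ≠ 0 := by positivity
    have h3 : ((n : ℝ) + 1 + 1) ≠ 0 := by positivity
    rw [show ((n : ℝ) + 1)⁻¹ * ((n : ℝ) + 1 + 1)⁻¹ * (((n : ℝ) + 1 + 1) * (n + 1)) = 1 by
      field_simp]
    simp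
  have hR : wgtMap m N (∑ a, f a ^ 2) = ∑ a, ∑ k : Fin D, ∑ l : Fin D,
      C ((Matrix.of fun k l : Fin D => wgt (k + l + 2)) k l) *
      (homogeneousComponent (k + 1) (f a) * homogeneousComponent (l + 1) (f a)) := by
    rw [map_sum]
    refine Finset.sum_congr rfl fun a _ => ?_
    conv_lhs => rw [hfk a, sq, Finset.sum_mul_sum, map_sum]
    refine Finset.sum_congr rfl fun k _ => ?_
    rw [map_sum]
    refine Finset.sum_congr rfl fun l _ => ?_
    have hh := (homogeneousComponent_isHomogeneous (k + 1 : ℕ) (f a)).mul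
      (homogeneousComponent_isHomogeneous (l + 1 : ℕ) (f a))
    rw [wgtMap_hom hh (by have := k.2; have := l.2; omega), C_mul', Matrix.of_apply]
    congr 2
    omega
  refine ⟨homogeneousComponent 1 p, wgtMap m N (eulerTwo m p),
    homogeneousComponent_isHomogeneous 1 p, ?_, ?_⟩
  · rw [hΦ, hR]
    exact isSOS_sum _ _ fun a _ => isSOS_of_posSemidef (wgt_posSemidef D) _
  · have h0 : eval 0 p = coeff 0 p := by
      rw [← constantCoeff_eq, ← eval_zero]
    rw [hL, h0]
    conv_lhs => rw [← sum_homogeneousComponent' p hD1]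
    rw [Finset.sum_range_succ', Finset.sum_range_succ', homogeneousComponent_zero]
    ring

/-! ### Translation -/

/-- translation `p ↦ p(· + a)`. -/
def transl {m : ℕ} (a : Fin m → ℝ) : MvPolynomial (Fin m) ℝ →ₐ[ℝ] MvPolynomial (Fin m) ℝ :=
  aeval fun i => X i + C (a i)

lemma transl_neg {m : ℕ} (a : Fin m → ℝ) (p : MvPolynomial (Fin m) ℝ) :
    transl (-a) (transl a p) = p := by
  have : (transl (-a)).comp (transl a) = AlgHom.id ℝ _ := by
    ext i : 1
    simp [transl]
  exact congrArg (fun T : MvPolynomial (Fin m) ℝ →ₐ[ℝ] MvPolynomial (Fin m) ℝ => T p) this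

lemma pderiv_transl {m : ℕ} (a : Fin m → ℝ) (i : Fin m) (p : MvPolynomial (Fin m) ℝ) :
    pderiv i (transl a p) = transl a (pderiv i p) := by
  induction p using MvPolynomial.induction_on with
  | C c => simp [transl]
  | add p q hp hq => simp [hp, hq]
  | mul_X p j hp =>
    rw [map_mul, pderiv_mul, pderiv_mul, hp, map_add, map_mul, map_mul]
    congr 2
    by_cases h : i = j
    · subst h; simp [transl]
    · simp [transl, pderiv_X_of_ne (Ne.symm h)]

lemma IsSOSConvex.transl {m : ℕ} {p : MvPolynomial (Fin m) ℝ} (hp : IsSOSConvex p)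
    (a : Fin m → ℝ) : IsSOSConvex (transl a p) := by
  obtain ⟨s, P, hP⟩ := hp
  refine ⟨s, Matrix.of fun i j => _root_.transl a (P i j), ?_⟩
  ext1 i j
  have := congrFun (congrFun hP i) j
  simp only [polyHessian, Matrix.of_apply, Matrix.mul_apply, Matrix.transpose_apply] at this ⊢
  rw [pderiv_transl, pderiv_transl, this]
  simp

lemma hom_one_eq {m : ℕ} {q : MvPolynomial (Fin m) ℝ} (hq : q.IsHomogeneous 1) :
    ∃ c : Fin m → ℝ, q = ∑ i, C (c i) * X i := by
  have h := hq.sum_X_mul_pderiv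
  have h2 : ∀ i, ∃ c, pderiv i q = C c := by
    intro i
    have := hq.pderiv (i := i)
    rw [show 1 - 1 = 0 from rfl, ← totalDegree_zero_iff_isHomogeneous,
      totalDegree_eq_zero_iff_eq_C] at this
    exact ⟨_, this⟩
  choose c hc using h2
  refine ⟨c, ?_⟩
  rw [one_smul] at h
  rw [← h]
  simp_rw [hc, mul_comm]

lemma decomp_at {m : ℕ} {p : MvPolynomial (Fin m) ℝ} (hp : IsSOSConvex p) (a : Fin m → ℝ) :
    ∃ (c : Fin m → ℝ) (σ : MvPolynomial (Fin m) ℝ), IsSOS σ ∧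
      p = C (eval a p) + ∑ i, C (c i) * (X i - C (a i)) + σ := by
  obtain ⟨q, σ, hq, hσ, h⟩ := decomp_zero (hp.transl a)
  obtain ⟨c, rfl⟩ := hom_one_eq hq
  have h0 : eval 0 (transl a p) = eval a p := by
    simp only [transl]
    rw [← MvPolynomial.coe_aeval_eq_eval, ← MvPolynomial.coe_aeval_eq_eval]
    rw [RingHom.coe_coe, RingHom.coe_coe]
    rw [← AlgHom.comp_apply, MvPolynomial.comp_aeval]
    simp
  refine ⟨c, transl (-a) σ, hσ.map_algHom _, ?_⟩
  have h1 := congrArg (transl (-a)) h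
  rw [transl_neg, h0] at h1
  conv_lhs => rw [h1]
  simp [transl, sub_eq_add_neg]

lemma lin_zero {m : ℕ} {σ : MvPolynomial (Fin m) ℝ} (hσ : IsSOS σ) (a e : Fin m → ℝ)
    (h0 : eval a σ = 0) (h : ∀ v : Fin m → ℝ, 0 ≤ ∑ i, e i * (v i - a i) + eval v σ) :
    ∀ i, e i = 0 := by
  set u : Polynomial ℝ := aeval (fun i => Polynomial.C (a i) + Polynomial.C (-e i) * Polynomial.X) σ
    with hu
  have hev : ∀ t : ℝ, u.eval t = eval (fun i => a i + -e i * t) σ := by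
    intro t
    have : ((Polynomial.aeval t).comp
        (aeval (fun i => Polynomial.C (a i) + Polynomial.C (-e i) * Polynomial.X)) :
        MvPolynomial (Fin m) ℝ →ₐ[ℝ] ℝ) = aeval (fun i => a i + -e i * t) := by
      ext i
      simp
    have h2 := congrArg (fun T : MvPolynomial (Fin m) ℝ →ₐ[ℝ] ℝ => T σ) this
    simpa [Polynomial.coe_aeval_eq_eval, MvPolynomial.aeval_eq_eval, hu] using h2
  have hu0 : u.eval 0 = 0 := by rw [hev]; simpa using h0
  have hd : HasDerivAt (fun t => u.eval t) (u.derivative.eval 0) 0 := u.hasDerivAt 0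
  have hmin : IsLocalMin (fun t => u.eval t) 0 := by
    refine Filter.Eventually.of_forall fun t => ?_
    simp only [hu0]
    rw [hev]
    exact hσ.eval_nonneg _
  have hd0 := hmin.hasDerivAt_eq_zero hd
  set E := ∑ i, e i * e i
  have hd2 : HasDerivAt (fun t => -E * t + u.eval t) (-E * 1 + u.derivative.eval 0) 0 :=
    ((hasDerivAt_id (0 : ℝ)).const_mul (-E)).add hd
  have hmin2 : IsLocalMin (fun t => -E * t + u.eval t) 0 := by
    refine Filter.Eventually.of_forall fun t => ?_
    simp only [hu0]
    rw [hev]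
    have := h (fun i => a i + -e i * t)
    have h3 : ∑ i, e i * (a i + -e i * t - a i) = -E * t := by
      rw [← Finset.sum_neg_distrib, Finset.sum_mul]
      refine Finset.sum_congr rfl fun i _ => by ring
    rw [h3] at this
    linarith
  have hE := hmin2.hasDerivAt_eq_zero hd2
  rw [hd0] at hE
  have hE0 : E = 0 := by linarith
  intro i
  have := (Finset.sum_eq_zero_iff_of_nonneg (fun i _ => mul_self_nonneg (e i))).1 hE0 i
    (Finset.mem_univ i)
  exact mul_self_eq_zero.1 this

lemma IsSOSConvex.convexOn {m : ℕ} {p : MvPolynomial (Fin m) ℝ} (hp : IsSOSConvex p) :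
    ConvexOn ℝ Set.univ (fun v => eval v p) := by
  refine ⟨convex_univ, fun x _ y _ s t hs ht hst => ?_⟩
  obtain ⟨c, σ, hσ, h⟩ := decomp_at hp (s • x + t • y)
  set z := s • x + t • y with hz
  set b := eval z p
  have hle : ∀ v, b + ∑ i, c i * (v i - z i) ≤ eval v p := by
    intro v
    rw [h]
    simpa using hσ.eval_nonneg v
  have hx := mul_le_mul_of_nonneg_left (hle x) hs
  have hy := mul_le_mul_of_nonneg_left (hle y) ht
  have h0 : s * ∑ i, c i * (x i - z i) + t * ∑ i, c i * (y i - z i) = 0 := by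
    rw [Finset.mul_sum, Finset.mul_sum, ← Finset.sum_add_distrib]
    refine Finset.sum_eq_zero fun i _ => ?_
    have : z i = s * x i + t * y i := rfl
    rw [this]
    obtain rfl : t = 1 - s := by linarith
    ring
  simp only [smul_eq_mul]
  have hb : s * b + t * b = b := by rw [← add_mul, hst, one_mul]
  change b ≤ _
  nlinarith

/-! ### Separation -/

lemma nonneg_of_ray {a b : ℝ} (h : ∀ t : ℝ, 0 ≤ t → 0 < a + t * b) : 0 ≤ b := by
  by_contra hb
  push Not at hb
  have ha : 0 < a := by simpa using h 0 le_rfl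
  have := h (a / -b) (div_nonneg ha.le (by linarith))
  have hb' : b ≠ 0 := hb.ne
  have h2 : a / -b * b = -a := by field_simp
  linarith

lemma nonneg_of_eps {a b : ℝ} (h : ∀ t : ℝ, 0 < t → 0 < a + t * b) : 0 ≤ a := by
  refine le_of_forall_pos_le_add fun ε hε => ?_
  have h1 : 0 < |b| + 1 := by positivity
  have := h (ε / (|b| + 1)) (by positivity)
  have h2 : ε / (|b| + 1) * b ≤ ε := by
    have h4 : ε / (|b| + 1) * b ≤ ε / (|b| + 1) * (|b| + 1) :=
      mul_le_mul_of_nonneg_left (by linarith [le_abs_self b]) (by positivity)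
    rwa [div_mul_cancel₀ _ h1.ne'] at h4
  linarith

/-- The quadratic form of a matrix. -/
def qf {ν : ℕ} (S : Matrix (Fin ν) (Fin ν) ℝ) (x : Fin ν → ℝ) : ℝ := x ⬝ᵥ (S *ᵥ x)

lemma qf_add {ν : ℕ} (S T : Matrix (Fin ν) (Fin ν) ℝ) (x : Fin ν → ℝ) :
    qf (S + T) x = qf S x + qf T x := by
  simp [qf, add_mulVec]

lemma qf_smul {ν : ℕ} (c : ℝ) (S : Matrix (Fin ν) (Fin ν) ℝ) (x : Fin ν → ℝ) :
    qf (c • S) x = c * qf S x := by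
  simp [qf, smul_mulVec]

lemma qf_smul_vec {ν : ℕ} (c : ℝ) (S : Matrix (Fin ν) (Fin ν) ℝ) (x : Fin ν → ℝ) :
    qf S (c • x) = c ^ 2 * qf S x := by
  simp [qf, mulVec_smul]
  ring

lemma continuous_qf {ν : ℕ} :
    Continuous fun z : Matrix (Fin ν) (Fin ν) ℝ × (Fin ν → ℝ) => qf z.1 z.2 := by
  unfold qf
  simp only [dotProduct, mulVec]
  fun_prop

lemma isOpen_qf_pos {ν : ℕ} :
    IsOpen {S : Matrix (Fin ν) (Fin ν) ℝ | ∀ x : Fin ν → ℝ, x ≠ 0 → 0 < qf S x} := by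
  rw [isOpen_iff_mem_nhds]
  intro S hS
  have hK : IsCompact (Metric.sphere (0 : Fin ν → ℝ) 1) := isCompact_sphere _ _
  have := hK.eventually_forall_of_forall_eventually (x₀ := S)
    (P := fun S x => 0 < qf S x) (fun y hy => by
      have hy0 : y ≠ 0 := by
        rintro rfl
        simp at hy
      exact continuous_qf.continuousAt.eventually (lt_mem_nhds (hS y hy0)))
  filter_upwards [this] with T hT x hx
  have hn : ‖x‖ ≠ 0 := by simpa using hx
  have h1 := hT (‖x‖⁻¹ • x) (by simp [norm_smul, hn])
  rw [qf_smul_vec] at h1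
  have : 0 < (‖x‖⁻¹) ^ 2 := by positivity
  exact pos_of_mul_pos_right h1 this.le

lemma sep {W : Type*} [AddCommGroup W] [Module ℝ W] {L ν : ℕ}
    (g : Fin L → W → ℝ) (hg : ∀ ℓ, ConvexOn ℝ Set.univ (g ℓ))
    (G : W → Matrix (Fin ν) (Fin ν) ℝ)
    (haff : ∀ (s t : ℝ) (w w' : W), s + t = 1 → G (s • w + t • w') = s • G w + t • G w')
    (hsymm : ∀ w, (G w).IsSymm)
    (hpos : ∀ w, (G w).PosSemidef → ∃ ℓ, 0 ≤ g ℓ w)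
    (w0 : W) (hw0 : (G w0).PosDef) :
    ∃ (Z : Matrix (Fin ν) (Fin ν) ℝ) (δ : Fin L → ℝ), Z.PosSemidef ∧ (∀ ℓ, 0 ≤ δ ℓ) ∧
      ∑ ℓ, δ ℓ = 1 ∧ ∀ w, (Z * G w).trace ≤ ∑ ℓ, δ ℓ * g ℓ w := by
  set A : Set ((Fin L → ℝ) × Matrix (Fin ν) (Fin ν) ℝ) :=
    {p | ∃ w, (∀ ℓ, g ℓ w < p.1 ℓ) ∧ ∀ x : Fin ν → ℝ, x ≠ 0 → 0 < qf (G w + p.2) x} with hA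
  have hopen : IsOpen A := by
    have : A = ⋃ w, ({p | ∀ ℓ, g ℓ w < p.1 ℓ} ∩
        (fun p : (Fin L → ℝ) × Matrix (Fin ν) (Fin ν) ℝ => G w + p.2) ⁻¹'
          {S | ∀ x : Fin ν → ℝ, x ≠ 0 → 0 < qf S x}) := by
      ext p
      simp [hA]
    rw [this]
    refine isOpen_iUnion fun w => IsOpen.inter ?_ (isOpen_qf_pos.preimage (by fun_prop))
    simp only [Set.ofPred_forall]
    exact isOpen_iInter_of_finite fun ℓ => isOpen_lt continuous_const (by fun_prop)
  have hconv : Convex ℝ A := by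
    rw [convex_iff_forall_pos]
    rintro ⟨y, S⟩ ⟨w, hw1, hw2⟩ ⟨y', S'⟩ ⟨w', hw1', hw2'⟩ s t hs ht hst
    refine ⟨s • w + t • w', fun ℓ => ?_, fun x hx => ?_⟩
    · have h1 := (hg ℓ).2 (Set.mem_univ w) (Set.mem_univ w') hs.le ht.le hst
      have h2 := mul_lt_mul_of_pos_left (hw1 ℓ) hs
      have h3 := mul_lt_mul_of_pos_left (hw1' ℓ) ht
      simp at h1 h2 h3 ⊢
      linarith
    · rw [haff s t w w' hst]
      have h2 := mul_pos hs (hw2 x hx)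
      have h3 := mul_pos ht (hw2' x hx)
      simp only [Prod.snd_add, Prod.smul_snd, qf_add, qf_smul] at h2 h3 ⊢
      linarith
  have h0 : (0 : (Fin L → ℝ) × Matrix (Fin ν) (Fin ν) ℝ) ∉ A := by
    rintro ⟨w, hw1, hw2⟩
    have hps : (G w).PosSemidef := by
      refine Matrix.PosSemidef.of_dotProduct_mulVec_nonneg ?_ fun x => ?_
      · have := hsymm w
        rw [Matrix.IsSymm] at this
        rw [Matrix.IsHermitian, conjTranspose_eq_transpose_of_trivial, this]
      · by_cases hx : x = 0
        · simp [hx]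
        · have := hw2 x hx
          simp [qf] at this
          simpa using this.le
    obtain ⟨ℓ, hℓ⟩ := hpos w hps
    have := hw1 ℓ
    simp at this
    linarith
  obtain ⟨f, hf⟩ := geometric_hahn_banach_point_open hconv hopen h0
  rw [map_zero] at hf
  have ha0 : ((fun ℓ => g ℓ w0 + 1, 0) : (Fin L → ℝ) × Matrix (Fin ν) (Fin ν) ℝ) ∈ A := by
    refine ⟨w0, fun ℓ => by simp, fun x hx => ?_⟩
    simpa [qf] using hw0.dotProduct_mulVec_pos hx
  have hrec : ∀ (y : Fin L → ℝ) (S : Matrix (Fin ν) (Fin ν) ℝ), (∀ ℓ, 0 ≤ y ℓ) →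
      (∀ x, 0 ≤ qf S x) → 0 ≤ f (y, S) := by
    intro y S hy hS
    obtain ⟨w, hw1, hw2⟩ := ha0
    refine nonneg_of_ray (a := f (fun ℓ => g ℓ w0 + 1, 0)) fun t ht => ?_
    rw [← smul_eq_mul, ← map_smul, ← map_add]
    refine hf _ ⟨w, fun ℓ => ?_, fun x hx => ?_⟩
    · have h1 := hw1 ℓ
      have h2 := mul_nonneg ht (hy ℓ)
      simp at h1 h2 ⊢
      linarith
    · have h1 := hw2 x hx
      have h2 := mul_nonneg ht (hS x)
      simp only [Prod.snd_add, Prod.smul_snd, qf_add, qf_smul] at h1 h2 ⊢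
      linarith
  set Z : Matrix (Fin ν) (Fin ν) ℝ := Matrix.of fun i j => f (0, Matrix.single j i 1) with hZ
  set δ : Fin L → ℝ := fun ℓ => f (Pi.single ℓ 1, 0) with hδ
  have hfZ : ∀ S, f (0, S) = (Z * S).trace := by
    intro S
    have h1 : f (0, S) = (f.toLinearMap ∘ₗ LinearMap.inr ℝ _ _) S := rfl
    rw [h1]
    conv_lhs => rw [Matrix.matrix_eq_sum_single S]
    simp only [map_sum, Matrix.trace, Matrix.diag, Matrix.mul_apply]
    rw [Finset.sum_comm]
    refine Finset.sum_congr rfl fun i _ => Finset.sum_congr rfl fun j _ => ?_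
    have : Matrix.single j i (S j i) = S j i • Matrix.single j i (1 : ℝ) := by simp
    rw [this, map_smul]
    simp [hZ, mul_comm]
  have hfδ : ∀ y, f (y, 0) = ∑ ℓ, δ ℓ * y ℓ := by
    intro y
    have h1 : f (y, 0) = (f.toLinearMap ∘ₗ LinearMap.inl ℝ _ _) y := rfl
    rw [h1, LinearMap.pi_apply_eq_sum_univ]
    refine Finset.sum_congr rfl fun i _ => ?_
    rw [smul_eq_mul, mul_comm]
    congr 1
    have : (fun j => if i = j then (1 : ℝ) else 0) = Pi.single i 1 := by
      ext j
      simp [Pi.single_apply, eq_comm]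
    rw [this]
    rfl
  have hfsum : ∀ y S, f (y, S) = ∑ ℓ, δ ℓ * y ℓ + (Z * S).trace := by
    intro y S
    rw [← hfZ, ← hfδ, ← map_add]
    simp
  have hδ0 : ∀ ℓ, 0 ≤ δ ℓ := fun ℓ => hrec _ _ (fun j => by
    by_cases h : j = ℓ
    · subst h; simp
    · simp [h]) (by simp [qf])
  have hZle : ∀ i j, Z i j ≤ Z j i := by
    intro i j
    have h1 := hrec 0 (Matrix.single i j 1 - Matrix.single j i 1) (by simp) (fun x => by
      have hs : ∀ i j, qf (Matrix.single i j (1 : ℝ)) x = x i * x j := by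
        intro i j
        have : Function.update (0 : Fin ν → ℝ) i (x j) = Pi.single i (x j) := rfl
        simp [qf, Matrix.single_mulVec, this]
      have h1 := qf_add (Matrix.single i j (1 : ℝ) - Matrix.single j i 1) (Matrix.single j i 1) x
      rw [sub_add_cancel, hs, hs] at h1
      linarith [mul_comm (x i) (x j)])
    have h2 : ((0, Matrix.single i j 1 - Matrix.single j i 1) :
        (Fin L → ℝ) × Matrix (Fin ν) (Fin ν) ℝ) =
        (0, Matrix.single i j 1) - (0, Matrix.single j i 1) := by simp
    rw [h2, map_sub] at h1
    simp only [hZ, Matrix.of_apply]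
    linarith
  have hZps : Z.PosSemidef := by
    refine Matrix.PosSemidef.of_dotProduct_mulVec_nonneg ?_ fun x => ?_
    · ext i j
      simpa using le_antisymm (hZle j i) (hZle i j)
    · have h1 := hrec 0 (Matrix.vecMulVec x x) (by simp) (fun y => by
        have : qf (Matrix.vecMulVec x x) y = (x ⬝ᵥ y) ^ 2 := by
          simp only [qf, Matrix.vecMulVec_mulVec]
          simp [dotProduct_comm y x]
          ring
        rw [this]; positivity)
      rw [hfZ, Matrix.mul_vecMulVec, Matrix.trace_vecMulVec] at h1
      simpa [dotProduct_comm] using h1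
  have hs : 0 < ∑ ℓ, δ ℓ := by
    refine lt_of_le_of_ne (Finset.sum_nonneg fun ℓ _ => hδ0 ℓ) fun h => ?_
    have h1 := (Finset.sum_eq_zero_iff_of_nonneg (fun ℓ _ => hδ0 ℓ)).1 h.symm
    have h2 := hf _ ha0
    rw [hfδ, Finset.sum_eq_zero (fun ℓ hℓ => by rw [h1 ℓ hℓ, zero_mul])] at h2
    exact lt_irrefl _ h2
  have hmain : ∀ w, (Z * G w).trace ≤ ∑ ℓ, δ ℓ * g ℓ w := by
    intro w
    have h1 : 0 ≤ f (fun ℓ => g ℓ w, - G w) := by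
      refine nonneg_of_eps (b := f (fun _ => 1, 1)) fun t ht => ?_
      rw [← smul_eq_mul, ← map_smul, ← map_add]
      refine hf _ ⟨w, fun ℓ => by simpa using ht, fun x hx => ?_⟩
      have : G w + ((fun ℓ => g ℓ w, - G w) + t • ((fun _ => 1, 1) :
          (Fin L → ℝ) × Matrix (Fin ν) (Fin ν) ℝ)).2 = t • (1 : Matrix (Fin ν) (Fin ν) ℝ) := by
        simp
      rw [this, qf_smul]
      refine mul_pos ht ?_
      simp only [qf, one_mulVec]
      exact lt_of_le_of_ne (Finset.sum_nonneg fun i _ => mul_self_nonneg _)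
        fun h => hx (dotProduct_self_eq_zero.1 h.symm)
    rw [hfsum] at h1
    simp at h1
    linarith
  set s := ∑ ℓ, δ ℓ
  refine ⟨s⁻¹ • Z, fun ℓ => s⁻¹ * δ ℓ, hZps.smul (by positivity),
    fun ℓ => mul_nonneg (by positivity) (hδ0 ℓ), ?_, fun w => ?_⟩
  · rw [← Finset.mul_sum]
    exact inv_mul_cancel₀ hs.ne'
  · rw [Matrix.smul_mul, Matrix.trace_smul, smul_eq_mul]
    simp_rw [mul_assoc]
    rw [← Finset.mul_sum]
    exact mul_le_mul_of_nonneg_left (hmain w) (by positivity)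

open scoped MatrixOrder in
lemma trace_mul_nonneg' {ν : ℕ} {A B : Matrix (Fin ν) (Fin ν) ℝ} (hA : A.PosSemidef)
    (hB : B.PosSemidef) : 0 ≤ (A * B).trace := by
  obtain ⟨R, rfl⟩ := CStarAlgebra.nonneg_iff_eq_star_mul_self.mp hA.nonneg
  rw [Matrix.mul_assoc, Matrix.trace_mul_comm]
  exact (hB.mul_mul_conjTranspose_same R).trace_nonneg

lemma trace_expand {m N ν : ℕ} (Z F0 : Matrix (Fin ν) (Fin ν) ℝ)
    (F : Fin m → Matrix (Fin ν) (Fin ν) ℝ) (M : Fin N → Matrix (Fin ν) (Fin ν) ℝ)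
    (v : Fin m → ℝ) (ξ : Fin N → ℝ) :
    (Z * (F0 + ∑ i, v i • F i + ∑ t, ξ t • M t)).trace =
      (Z * F0).trace + ∑ i, v i * (Z * F i).trace + ∑ t, ξ t * (Z * M t).trace := by
  simp [Matrix.mul_add, Matrix.mul_sum, Matrix.trace_sum]

lemma pwMinMax_nonneg_iff {m r L : ℕ} [NeZero r] [NeZero L]
    (g : Fin r → Fin L → MvPolynomial (Fin m) ℝ) (v : Fin m → ℝ) :
    0 ≤ pwMinMax g v ↔ ∀ k, ∃ ℓ, 0 ≤ eval v (g k ℓ) := by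
  simp [pwMinMax, Finset.le_inf'_iff, Finset.le_sup'_iff]

lemma forward {m N ν L : ℕ} [NeZero L]
    (F0 : Matrix (Fin ν) (Fin ν) ℝ) (F : Fin m → Matrix (Fin ν) (Fin ν) ℝ)
    (M : Fin N → Matrix (Fin ν) (Fin ν) ℝ)
    (hF0 : F0.IsSymm) (hF : ∀ i, (F i).IsSymm) (hM : ∀ t, (M t).IsSymm)
    (g : Fin L → MvPolynomial (Fin m) ℝ)
    (hg : ∀ ℓ, IsSOSConvex (g ℓ))
    (hcompact : IsCompact (projSpec F0 F M))
    (hslater : ∃ (vbar : Fin m → ℝ) (ξbar : Fin N → ℝ),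
      (F0 + ∑ i, vbar i • F i + ∑ t, ξbar t • M t).PosDef)
    (h : ∀ v ∈ projSpec F0 F M, ∃ ℓ, 0 ≤ eval v (g ℓ)) :
    ∃ (Z : Matrix (Fin ν) (Fin ν) ℝ) (δ : Fin L → ℝ),
        Z.PosSemidef ∧ (∀ ℓ, 0 ≤ δ ℓ) ∧ (∑ ℓ, δ ℓ = 1) ∧
        IsSOS (∑ ℓ, C (δ ℓ) * g ℓ - C ((Z * F0).trace)
          - ∑ i, C ((Z * F i).trace) * X i) ∧
        (∀ t, (Z * M t).trace = 0) := by
  obtain ⟨vb, ξb, hb⟩ := hslater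
  have hcont : ContinuousOn (fun v : Fin m → ℝ =>
      Finset.univ.sup' Finset.univ_nonempty fun ℓ => eval v (g ℓ)) (projSpec F0 F M) := by
    refine Continuous.continuousOn (Continuous.finset_sup'_apply _ fun ℓ _ => ?_)
    exact MvPolynomial.continuous_eval _
  obtain ⟨a, ⟨ξa, haΩ⟩, hamin⟩ := hcompact.exists_isMinOn ⟨vb, ξb, hb.posSemidef⟩ hcont
  set c := Finset.univ.sup' Finset.univ_nonempty fun ℓ => eval a (g ℓ) with hc
  have hc0 : 0 ≤ c := by
    obtain ⟨ℓ, hℓ⟩ := h a ⟨ξa, haΩ⟩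
    exact hℓ.trans (Finset.le_sup' (fun ℓ => eval a (g ℓ)) (Finset.mem_univ ℓ))
  have hac : ∀ ℓ, eval a (g ℓ) ≤ c := fun ℓ =>
    Finset.le_sup' (fun ℓ => eval a (g ℓ)) (Finset.mem_univ ℓ)
  obtain ⟨Z, δ, hZ, hδ, hδ1, hmain⟩ := sep (W := (Fin m → ℝ) × (Fin N → ℝ))
    (fun ℓ w => eval w.1 (g ℓ) + -c)
    (fun ℓ => ((hg ℓ).convexOn.comp_linearMap (LinearMap.fst ℝ _ _)).add_const (-c))
    (fun w => F0 + ∑ i, w.1 i • F i + ∑ t, w.2 t • M t)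
    (by
      intro s t w w' hst
      have h1 : F0 = s • F0 + t • F0 := by rw [← add_smul, hst, one_smul]
      conv_lhs => rw [h1]
      simp only [Prod.fst_add, Prod.snd_add, Prod.smul_fst, Prod.smul_snd, Pi.add_apply,
        Pi.smul_apply, add_smul, Finset.sum_add_distrib, smul_add, Finset.smul_sum, smul_smul,
        smul_eq_mul]
      abel)
    (by
      intro w
      simp only [Matrix.IsSymm, Matrix.transpose_add, Matrix.transpose_sum,
        Matrix.transpose_smul]
      rw [hF0]
      simp_rw [fun i => show (F i)ᵀ = F i from hF i, fun i => show (M i)ᵀ = M i from hM i])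
    (by
      intro w hw
      have h1 : c ≤ _ := hamin (⟨w.2, hw⟩ : w.1 ∈ projSpec F0 F M)
      obtain ⟨ℓ, _, hℓ⟩ := (Finset.le_sup'_iff _).1 h1
      exact ⟨ℓ, by linarith⟩)
    (vb, ξb) hb
  have hsum : ∀ v : Fin m → ℝ, ∑ ℓ, δ ℓ * (eval v (g ℓ) + -c) = ∑ ℓ, δ ℓ * eval v (g ℓ) - c := by
    intro v
    simp only [mul_add, Finset.sum_add_distrib]
    rw [← Finset.sum_mul, hδ1]
    ring
  have hmain' : ∀ (v : Fin m → ℝ) (ξ : Fin N → ℝ),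
      (Z * F0).trace + ∑ i, v i * (Z * F i).trace + ∑ t, ξ t * (Z * M t).trace
        ≤ ∑ ℓ, δ ℓ * eval v (g ℓ) - c := by
    intro v ξ
    have := hmain (v, ξ)
    simp only at this
    rwa [trace_expand, hsum] at this
  have hM0 : ∀ t, (Z * M t).trace = 0 := by
    intro t
    have h1 : ∀ s : ℝ, (Z * F0).trace + ∑ i, a i * (Z * F i).trace + s * (Z * M t).trace
        ≤ ∑ ℓ, δ ℓ * eval a (g ℓ) - c := by
      intro s
      have := hmain' a (Pi.single t s)
      rwa [Finset.sum_eq_single t (fun b _ hb => by simp [hb]) (by simp), Pi.single_eq_same]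
        at this
    set x := (Z * M t).trace
    set u := (Z * F0).trace + ∑ i, a i * (Z * F i).trace
    set w := ∑ ℓ, δ ℓ * eval a (g ℓ) - c
    by_contra hx
    have := h1 ((w - u + 1) / x)
    rw [div_mul_cancel₀ _ hx] at this
    linarith
  have hv : ∀ v : Fin m → ℝ, (Z * F0).trace + ∑ i, v i * (Z * F i).trace
        ≤ ∑ ℓ, δ ℓ * eval v (g ℓ) - c := by
    intro v
    simpa using hmain' v 0
  have htr : 0 ≤ (Z * F0).trace + ∑ i, a i * (Z * F i).trace := by
    have := trace_mul_nonneg' hZ haΩ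
    rw [trace_expand] at this
    simpa [hM0] using this
  have hga : ∑ ℓ, δ ℓ * eval a (g ℓ) ≤ c := by
    calc ∑ ℓ, δ ℓ * eval a (g ℓ) ≤ ∑ ℓ, δ ℓ * c :=
          Finset.sum_le_sum fun ℓ _ => mul_le_mul_of_nonneg_left (hac ℓ) (hδ ℓ)
      _ = c := by rw [← Finset.sum_mul, hδ1, one_mul]
  choose e σ hσ hdec using fun ℓ => decomp_at (hg ℓ) a
  have hσa : ∀ ℓ, eval a (σ ℓ) = 0 := by
    intro ℓ
    have := congrArg (eval a) (hdec ℓ)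
    simp at this
    exact this
  set Sg : MvPolynomial (Fin m) ℝ := ∑ ℓ, C (δ ℓ) * σ ℓ with hSg
  have hSgsos : IsSOS Sg := isSOS_sum _ _ fun ℓ _ => (hσ ℓ).C_mul' (hδ ℓ)
  have hSga : eval a Sg = 0 := by simp [hSg, hσa]
  set E : Fin m → ℝ := fun i => ∑ ℓ, δ ℓ * e ℓ i - (Z * F i).trace with hE
  set β : ℝ := ∑ ℓ, δ ℓ * eval a (g ℓ) - (Z * F0).trace - ∑ i, a i * (Z * F i).trace with hβ
  have hβc : β = c := by
    have := hv a
    apply le_antisymm <;> linarith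
  have key : ∑ ℓ, C (δ ℓ) * g ℓ - C ((Z * F0).trace) - ∑ i, C ((Z * F i).trace) * X i
      = C β + ∑ i, C (E i) * (X i - C (a i)) + Sg := by
    have h1 : ∑ ℓ, C (δ ℓ) * g ℓ = C (∑ ℓ, δ ℓ * eval a (g ℓ))
        + ∑ i, C (∑ ℓ, δ ℓ * e ℓ i) * (X i - C (a i)) + Sg := by
      have h2 : ∀ ℓ, C (δ ℓ) * g ℓ = C (δ ℓ * eval a (g ℓ))
          + ∑ i, C (δ ℓ * e ℓ i) * (X i - C (a i)) + C (δ ℓ) * σ ℓ := by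
        intro ℓ
        conv_lhs => rw [hdec ℓ]
        rw [mul_add, mul_add, Finset.mul_sum]
        simp only [C_mul, mul_assoc]
      simp_rw [h2, Finset.sum_add_distrib, map_sum, Finset.sum_mul]
      congr 2
      rw [Finset.sum_comm]
    rw [h1]
    simp only [hE, hβ, C_sub, sub_mul, mul_sub, Finset.sum_sub_distrib, map_sum, C_mul]
    have h3 : ∀ i, (C (a i) * C ((Z * F i).trace) : MvPolynomial (Fin m) ℝ) =
        C ((Z * F i).trace) * C (a i) :=
      fun i => mul_comm _ _
    simp_rw [h3]
    ring
  have hE0 : ∀ i, E i = 0 := by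
    refine lin_zero hSgsos a E hSga fun v => ?_
    have h1 := congrArg (eval v) key
    simp only [map_sub, map_add, map_sum, map_mul, eval_C, eval_X] at h1
    have h2 := hv v
    have h3 : ∑ i, v i * (Z * F i).trace = ∑ i, (Z * F i).trace * v i :=
      Finset.sum_congr rfl fun i _ => mul_comm _ _
    linarith
  refine ⟨Z, δ, hZ, hδ, hδ1, ?_, hM0⟩
  rw [key, hβc]
  simp only [hE0, C_0, zero_mul, Finset.sum_const_zero, add_zero]
  exact (isSOS_C hc0).add' hSgsos

/-- SOS representation for non-negative piecewise SOS-convex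
functions over a compact projected spectrahedron. -/
theorem sos_representation_piecewise_sosConvex
    {m N ν L r : ℕ} [NeZero L] [NeZero r]
    (F0 : Matrix (Fin ν) (Fin ν) ℝ) (F : Fin m → Matrix (Fin ν) (Fin ν) ℝ)
    (M : Fin N → Matrix (Fin ν) (Fin ν) ℝ)
    (hF0 : F0.IsSymm) (hF : ∀ i, (F i).IsSymm) (hM : ∀ t, (M t).IsSymm)
    (g : Fin r → Fin L → MvPolynomial (Fin m) ℝ)
    (hg : ∀ k ℓ, IsSOSConvex (g k ℓ))
    (hcompact : IsCompact (projSpec F0 F M))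
    (hslater : ∃ (vbar : Fin m → ℝ) (ξbar : Fin N → ℝ),
      (F0 + ∑ i, vbar i • F i + ∑ t, ξbar t • M t).PosDef)
    (d : ℕ) (hdeven : Even d)
    (hdgt : ∀ k ℓ, (g k ℓ).totalDegree < d)
    (hdmin : ∀ d', Even d' → (∀ k ℓ, (g k ℓ).totalDegree < d') → d ≤ d') :
    (∀ v ∈ projSpec F0 F M, 0 ≤ pwMinMax g v) ↔
      (∀ k, ∃ (Z : Matrix (Fin ν) (Fin ν) ℝ) (δ : Fin L → ℝ),
        Z.PosSemidef ∧ (∀ ℓ, 0 ≤ δ ℓ) ∧ (∑ ℓ, δ ℓ = 1) ∧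
        IsSOSDeg d (∑ ℓ, C (δ ℓ) * g k ℓ - C ((Z * F0).trace)
          - ∑ i, C ((Z * F i).trace) * X i) ∧
        (∀ t, (Z * M t).trace = 0)) := by
  constructor
  · intro h k
    obtain ⟨Z, δ, hZ, hδ, hδ1, hsos, hM0⟩ := forward F0 F M hF0 hF hM (g k) (hg k) hcompact hslater
      (fun v hv => (pwMinMax_nonneg_iff g v).1 (h v hv) k)
    refine ⟨Z, δ, hZ, hδ, hδ1, ⟨hsos, ?_⟩, hM0⟩
    have hd2 : 1 ≤ d := by
      have := hdgt k 0
      omega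
    refine (totalDegree_sub _ _).trans (max_le ((totalDegree_sub _ _).trans (max_le ?_ ?_)) ?_)
    · refine totalDegree_finsetSum_le fun ℓ _ => ?_
      refine (totalDegree_mul _ _).trans ?_
      rw [totalDegree_C, zero_add]
      exact (hdgt k ℓ).le
    · rw [totalDegree_C]; omega
    · refine totalDegree_finsetSum_le fun i _ => ?_
      refine (totalDegree_mul _ _).trans ?_
      rw [totalDegree_C, totalDegree_X, zero_add]
      exact hd2
  · rintro h v ⟨ξ, hξ⟩
    rw [pwMinMax_nonneg_iff]
    intro k
    obtain ⟨Z, δ, hZ, hδ, hδ1, ⟨hsos, -⟩, hM0⟩ := h k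
    by_contra hneg
    push Not at hneg
    have h1 := hsos.eval_nonneg v
    have h2 := trace_mul_nonneg' hZ hξ
    rw [trace_expand] at h2
    simp only [hM0, mul_zero, Finset.sum_const_zero, add_zero] at h2
    simp only [map_sub, map_sum, map_mul, eval_C, eval_X] at h1
    have h3 : ∑ i, v i * (Z * F i).trace = ∑ i, (Z * F i).trace * v i :=
      Finset.sum_congr rfl fun i _ => mul_comm _ _
    have h4 : ∑ ℓ, δ ℓ * eval v (g k ℓ) < 0 := by
      refine Finset.sum_neg' (fun ℓ _ => mul_nonpos_of_nonneg_of_nonpos (hδ ℓ) (hneg ℓ).le) ?_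
      by_contra hall
      push Not at hall
      have : ∀ ℓ, δ ℓ = 0 := by
        intro ℓ
        have h5 := hall ℓ (Finset.mem_univ ℓ)
        have h6 := hδ ℓ
        have h7 := hneg ℓ
        by_contra h8
        have h9 : 0 < δ ℓ := lt_of_le_of_ne h6 (Ne.symm h8)
        have := mul_neg_of_pos_of_neg h9 h7
        linarith
      simp [this] at hδ1
    linarith

end
end

section
/- Let f ∈ ℝ[v], v ∈ ℝ^m, be an SOS-convex polynomial of even degree d. Let N = {α ∈ (ℕ∪{0})^m : Σ_i α_i ≤ d}, let y(v) denote the canonical monomial basis vector of degree ≤ d/2, and let B_α be the symmetric matrices determined by y(v)y(v)^T = Σ_{α∈N} B_α v^α. Let y = (y_α)_{α∈N} be a real vector with y_0 = 1 and Σ_{α∈N} y_α B_α ⪰ 0, and define the linear functional L_y on polynomials of degree ≤ d by L_y(f) = Σ_{α∈N} (f)_α y_α, where (f)_α is the α-th coefficient of f. Then L_y(f) ≥ f(L_y(v_1),…,L_y(v_m)), where L_y(v_i) = y_{e_i} is the value of L_y on the i-th coordinate polynomial. -/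
open MvPolynomial Matrix
open scoped BigOperators

noncomputable section

/-- The degree `|α|` of a multi-index `α`. -/
def mdeg {m : ℕ} (α : Fin m →₀ ℕ) : ℕ := α.sum fun _ e => e

/-- The condition `Σ_{α} y_α B_α ⪰ 0`: the moment matrix of `y`, indexed by
monomials of degree at most `d/2` (with `y(v) y(v)ᵀ = Σ_α B_α v^α`), is
positive semi-definite.  This is expressed by non-negativity of the associated
quadratic form on finitely supported vectors of coefficients. -/
def MomMatPSD {m : ℕ} (d : ℕ) (y : (Fin m →₀ ℕ) → ℝ) : Prop :=
  ∀ c : (Fin m →₀ ℕ) →₀ ℝ, (∀ β ∈ c.support, mdeg β ≤ d / 2) →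
    0 ≤ ∑ β ∈ c.support, ∑ γ ∈ c.support, c β * c γ * y (β + γ)

/-- The Riesz functional of `y`. -/
def rieszL {m : ℕ} (y : (Fin m →₀ ℕ) → ℝ) : MvPolynomial (Fin m) ℝ →ₗ[ℝ] ℝ :=
  (basisMonomials (Fin m) ℝ).constr ℝ y

lemma rieszL_monomial {m : ℕ} (y : (Fin m →₀ ℕ) → ℝ) (α : Fin m →₀ ℕ) (c : ℝ) :
    rieszL y (monomial α c) = c * y α := by
  have h1 : rieszL y (monomial α 1) = y α := by
    have := (basisMonomials (Fin m) ℝ).constr_basis ℝ y α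
    rwa [coe_basisMonomials] at this
  have h2 : (monomial α c : MvPolynomial (Fin m) ℝ) = c • monomial α 1 := by
    rw [smul_monomial, smul_eq_mul, mul_one]
  rw [h2, map_smul, h1, smul_eq_mul]

lemma rieszL_apply {m : ℕ} (y : (Fin m →₀ ℕ) → ℝ) (p : MvPolynomial (Fin m) ℝ) :
    rieszL y p = ∑ α ∈ p.support, MvPolynomial.coeff α p * y α := by
  conv_lhs => rw [← support_sum_monomial_coeff p]
  rw [map_sum]
  exact Finset.sum_congr rfl fun α _ => rieszL_monomial y α _

lemma rieszL_sq_nonneg {m d : ℕ} (y : (Fin m →₀ ℕ) → ℝ) (hPSD : MomMatPSD d y)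
    (r : MvPolynomial (Fin m) ℝ) (hr : r.totalDegree ≤ d / 2) : 0 ≤ rieszL y (r * r) := by
  have h := hPSD (AddMonoidAlgebra.coeff r) (fun β hβ => (le_totalDegree hβ).trans hr)
  have e : rieszL y (r * r) = ∑ β ∈ r.support, ∑ γ ∈ r.support,
      MvPolynomial.coeff β r * MvPolynomial.coeff γ r * y (β + γ) := by
    conv_lhs => rw [← support_sum_monomial_coeff r]
    rw [Finset.sum_mul_sum, map_sum]
    refine Finset.sum_congr rfl fun β _ => ?_
    rw [map_sum]
    refine Finset.sum_congr rfl fun γ _ => ?_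
    rw [monomial_mul, rieszL_monomial]
  rw [e]
  exact h

lemma sos_degree {m s n : ℕ} (r : Fin s → MvPolynomial (Fin m) ℝ)
    (h : (∑ k, r k * r k).totalDegree ≤ 2 * n) (k : Fin s) : (r k).totalDegree ≤ n := by
  classical
  obtain ⟨k₀, -, hk₀⟩ := Finset.exists_max_image Finset.univ
    (fun k => MonomialOrder.degLex.toSyn (MonomialOrder.degLex.degree (r k))) ⟨k, Finset.mem_univ k⟩
  refine (degLex_totalDegree_monotone (hk₀ k (Finset.mem_univ k))).trans ?_
  by_cases h0 : r k₀ = 0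
  · simp [h0]
  set α := MonomialOrder.degLex.degree (r k₀) with hα
  have hc : MvPolynomial.coeff (α + α) (∑ k, r k * r k) ≠ 0 := by
    rw [coeff_sum]
    have : ∀ j, MvPolynomial.coeff (α + α) (r j * r j)
        = MvPolynomial.coeff α (r j) * MvPolynomial.coeff α (r j) := fun j =>
      MonomialOrder.coeff_mul_of_add_of_degree_le (hk₀ j (Finset.mem_univ j))
        (hk₀ j (Finset.mem_univ j))
    simp_rw [this]
    have hp : 0 < MvPolynomial.coeff α (r k₀) * MvPolynomial.coeff α (r k₀) :=
      mul_self_pos.2 (MonomialOrder.degLex.coeff_degree_ne_zero_iff.2 h0)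
    have := Finset.single_le_sum
      (f := fun j => MvPolynomial.coeff α (r j) * MvPolynomial.coeff α (r j))
      (fun j _ => mul_self_nonneg _) (Finset.mem_univ k₀)
    exact (hp.trans_le this).ne'
  have h1 := (le_totalDegree (mem_support_iff.2 hc)).trans h
  have h2 : (α + α).degree ≤ 2 * n := h1
  rw [map_add] at h2
  rw [← degree_degLexDegree, ← hα]
  omega

lemma totalDegree_pderiv_le' {m n : ℕ} (i : Fin m) (p : MvPolynomial (Fin m) ℝ)
    (h : p.totalDegree ≤ n) : (pderiv i p).totalDegree ≤ n - 1 := by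
  refine Finset.sup_le fun α hα => ?_
  rw [mem_support_iff, coeff_pderiv] at hα
  have h1 := (le_totalDegree (mem_support_iff.2 (left_ne_zero_of_mul hα))).trans h
  have h2 : (α + Finsupp.single i 1).degree ≤ n := h1
  rw [map_add, Finsupp.degree_single] at h2
  change α.degree ≤ n - 1
  omega

/-- Substitution `v ↦ a + t (v - a)`. -/
def segSub {m : ℕ} (a : Fin m → ℝ) (t : ℝ) :
    MvPolynomial (Fin m) ℝ →ₐ[ℝ] MvPolynomial (Fin m) ℝ :=
  aeval fun i => C (a i) + t • (X i - C (a i))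

lemma totalDegree_segSub_le {m : ℕ} (a : Fin m → ℝ) (t : ℝ) (p : MvPolynomial (Fin m) ℝ) :
    (segSub a t p).totalDegree ≤ p.totalDegree := by
  have hl : ∀ i : Fin m, (C (a i) + t • (X i - C (a i)) :
      MvPolynomial (Fin m) ℝ).totalDegree ≤ 1 := fun i => by
    refine (totalDegree_add _ _).trans (max_le (by simp) ?_)
    refine (totalDegree_smul_le _ _).trans ((totalDegree_sub_C_le _ _).trans ?_)
    rw [totalDegree_X]
  unfold segSub
  rw [aeval_def, eval₂_eq]
  refine (totalDegree_finsetSum _ _).trans (Finset.sup_le fun α hα => ?_)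
  refine (totalDegree_mul _ _).trans ?_
  rw [algebraMap_eq, totalDegree_C, zero_add]
  refine (totalDegree_finsetProd _ _).trans ?_
  refine le_trans ?_ (le_totalDegree hα)
  refine Finset.sum_le_sum fun i _ => ?_
  refine (totalDegree_pow _ _).trans ?_
  simpa using Nat.mul_le_mul_left (α i) (hl i)

lemma hasDerivAt_segSub {m : ℕ} (L : MvPolynomial (Fin m) ℝ →ₗ[ℝ] ℝ) (a : Fin m → ℝ)
    (p : MvPolynomial (Fin m) ℝ) : ∀ (q : MvPolynomial (Fin m) ℝ) (t : ℝ),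
    HasDerivAt (fun t => L (q * segSub a t p))
      (L (q * ∑ i, (X i - C (a i)) * segSub a t (pderiv i p))) t := by
  classical
  induction p using MvPolynomial.induction_on with
  | C c =>
    intro q t
    have : (fun t => L (q * segSub a t (C c))) = fun _ => L (q * C c) := by
      funext t; simp [segSub]
    rw [this]
    simpa using hasDerivAt_const t (L (q * C c))
  | add p₁ p₂ h₁ h₂ =>
    intro q t
    have := (h₁ q t).add (h₂ q t)
    refine (this.congr_deriv ?_).congr_of_eventuallyEq (Filter.Eventually.of_forall ?_)
    rotate_left
    · intro t; simp [mul_add]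
    · simp only [map_add, mul_add, Finset.sum_add_distrib]
  | mul_X p j ih =>
    intro q t
    have h1 := ih (q * C (a j)) t
    have h2 := (hasDerivAt_id t).mul (ih (q * (X j - C (a j))) t)
    have := h1.add h2
    have hX : ∀ t, segSub a t (X j) = C (a j) + C t * (X j - C (a j)) := fun t => by
      simp [segSub, C_mul']
    have hC : ∀ (t : ℝ) (x : MvPolynomial (Fin m) ℝ), t * L x = L (C t * x) := fun t x => by
      rw [C_mul', map_smul, smul_eq_mul]
    refine (this.congr_deriv ?_).congr_of_eventuallyEq (Filter.Eventually.of_forall ?_)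
    rotate_left
    · intro t
      simp only [Pi.add_apply, Pi.mul_apply, id]
      rw [map_mul (segSub a t), hX, hC, ← map_add]
      congr 1; ring
    · simp only [id]
      rw [one_mul, hC, ← map_add, ← map_add]
      congr 1
      have hs : ∑ i, (X i - C (a i)) * segSub a t (pderiv i (p * X j))
          = segSub a t (X j) * (∑ i, (X i - C (a i)) * segSub a t (pderiv i p))
            + (X j - C (a j)) * segSub a t p := by
        have : ∀ i, (X i - C (a i)) * segSub a t (pderiv i (p * X j))
          = segSub a t (X j) * ((X i - C (a i)) * segSub a t (pderiv i p))
            + if i = j then (X j - C (a j)) * segSub a t p else 0 := fun i => by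
          rw [pderiv_mul, map_add, map_mul, map_mul]
          split_ifs with h
          · subst h; rw [pderiv_X_self, map_one]; ring
          · rw [pderiv_X_of_ne (Ne.symm h), map_zero]; ring
        simp_rw [this]
        rw [Finset.sum_add_distrib, ← Finset.mul_sum]
        simp
      rw [hs, hX]
      ring

/-- Generalized Jensen inequality for SOS-convex polynomials:
if `y_0 = 1` and `Σ_α y_α B_α ⪰ 0`, then `L_y(f) ≥ f(L_y(v))`. -/
theorem sosConvex_jensen {m d : ℕ} (hd : Even d)
    (f : MvPolynomial (Fin m) ℝ) (hconv : IsSOSConvex f)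
    (hdeg : f.totalDegree ≤ d) (y : (Fin m →₀ ℕ) → ℝ)
    (hy0 : y 0 = 1) (hPSD : MomMatPSD d y) :
    eval (fun i => y (Finsupp.single i 1)) f ≤
      ∑ α ∈ f.support, MvPolynomial.coeff α f * y α := by
  obtain ⟨n, hn⟩ := hd
  set a : Fin m → ℝ := fun i => y (Finsupp.single i 1) with ha
  rw [← rieszL_apply]
  rcases Nat.eq_zero_or_pos n with h0 | hpos
  · have hf := totalDegree_eq_zero_iff_eq_C.1 (show f.totalDegree = 0 by omega)
    rw [hf, eval_C, ← monomial_zero', rieszL_monomial, hy0, mul_one]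
  obtain ⟨s, P, hP⟩ := hconv
  have hH : ∀ i j, pderiv i (pderiv j f) = ∑ k, P k i * P k j := fun i j => by
    have := congrFun (congrFun hP i) j
    simpa [polyHessian, Matrix.mul_apply] using this
  have hPd : ∀ k i, (P k i).totalDegree ≤ n - 1 := fun k i => by
    refine sos_degree (fun k => P k i) ?_ k
    rw [← hH]
    refine (totalDegree_pderiv_le' i _ (totalDegree_pderiv_le' i _ hdeg)).trans ?_
    omega
  set L := rieszL y with hL
  set dphi : ℝ → ℝ := fun t => L (∑ i, (X i - C (a i)) * segSub a t (pderiv i f)) with hdphi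
  set ddphi : ℝ → ℝ := fun t => ∑ i, L ((X i - C (a i)) *
    ∑ j, (X j - C (a j)) * segSub a t (pderiv j (pderiv i f))) with hddphi
  have d1 : ∀ t, HasDerivAt (fun t => L (segSub a t f)) (dphi t) t := fun t => by
    simpa only [one_mul] using hasDerivAt_segSub L a f 1 t
  have d2 : ∀ t, HasDerivAt dphi (ddphi t) t := fun t => by
    have := HasDerivAt.fun_sum (u := Finset.univ) (fun i _ =>
      hasDerivAt_segSub L a (pderiv i f) (X i - C (a i)) t)
    simpa only [hdphi, map_sum] using this
  have pos : ∀ t, 0 ≤ ddphi t := fun t => by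
    have : ddphi t = ∑ k, L ((∑ i, (X i - C (a i)) * segSub a t (P k i)) *
        (∑ i, (X i - C (a i)) * segSub a t (P k i))) := by
      simp only [hddphi, hH]
      rw [← map_sum, ← map_sum]
      congr 1
      simp only [map_sum, map_mul, Finset.mul_sum, Finset.sum_mul]
      conv_rhs => rw [Finset.sum_comm]
      refine Finset.sum_congr rfl fun i _ => ?_
      conv_rhs => rw [Finset.sum_comm]
      refine Finset.sum_congr rfl fun j _ => ?_
      refine Finset.sum_congr rfl fun k _ => ?_
      ring
    rw [this]
    refine Finset.sum_nonneg fun k _ => rieszL_sq_nonneg y hPSD _ ?_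
    refine (totalDegree_finsetSum _ _).trans (Finset.sup_le fun i _ => ?_)
    refine (totalDegree_mul _ _).trans ?_
    have h1 := (totalDegree_sub_C_le (X i : MvPolynomial (Fin m) ℝ) (a i))
    rw [totalDegree_X] at h1
    have h2 := (totalDegree_segSub_le a t (P k i)).trans (hPd k i)
    omega
  have seg0 : ∀ p, segSub a 0 p = C (eval a p) := fun p => by
    have : segSub a 0 = (Algebra.ofId ℝ (MvPolynomial (Fin m) ℝ)).comp (aeval a) := by
      apply MvPolynomial.algHom_ext
      intro i
      simp [segSub, Algebra.ofId_apply, algebraMap_eq]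
    rw [this]
    simp [Algebra.ofId_apply, algebraMap_eq]
  have seg1 : segSub a 1 f = f := by
    have : segSub a 1 = AlgHom.id ℝ (MvPolynomial (Fin m) ℝ) := by
      apply MvPolynomial.algHom_ext
      intro i
      simp [segSub]
    rw [this]; rfl
  have LC : ∀ c, L (C c) = c := fun c => by
    rw [← monomial_zero', hL, rieszL_monomial, hy0, mul_one]
  have LX : ∀ i, L (X i) = a i := fun i => by
    rw [X, hL, rieszL_monomial, one_mul]
  have dphi_zero : dphi 0 = 0 := by
    simp only [hdphi, seg0, map_sum]
    refine Finset.sum_eq_zero fun i _ => ?_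
    rw [mul_comm, C_mul', map_smul, map_sub, LX, LC, sub_self, smul_zero]
  have mono : Monotone dphi := monotone_of_deriv_nonneg (fun t => (d2 t).differentiableAt)
    (fun t => by rw [(d2 t).deriv]; exact pos t)
  obtain ⟨c, hc, hslope⟩ := exists_hasDerivAt_eq_slope (fun t => L (segSub a t f)) dphi
    (zero_lt_one' ℝ) (fun t _ => (d1 t).continuousAt.continuousWithinAt) (fun t _ => d1 t)
  have := mono hc.1.le
  rw [dphi_zero, hslope] at this
  simp only [seg0, seg1, LC, sub_zero, div_one] at this
  linarith

end
end

section
/- Let Ω = [ω̲, ω̄] ⊂ ℝ with 0 ≤ ω̲ < ω̄, written as Ω = {v ∈ ℝ : F_0 + vF_1 ⪰ 0} with F_0 = diag(−ω̲, ω̄) and F_1 = diag(1, −1), and fix x ∈ ℝ, γ_1, γ_2 ∈ ℝ. Consider the moment problem (N): minimize E_μ^Ω[min{x − ω, 0}] over probability measures μ on Ω subject to E_μ^Ω[ω] ≤ γ_1 and E_μ^Ω[ω²] ≤ γ_2. Consider the SDP (N1): maximize −λ_1γ_1 − λ_2γ_2 − λ_3 over λ ∈ ℝ_+² × ℝ and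 2×2 PSD matrices Z, Z′ subject to the 2×2 matrices [[x + λ_3 − tr(ZF_0), ½(−1 + λ_1 − tr(ZF_1))], [½(−1 + λ_1 − tr(ZF_1)), λ_2]] and [[λ_3 − tr(Z′F_0), ½(λ_1 − tr(Z′F_1))], [½(λ_1 − tr(Z′F_1)), λ_2]] being positive semi-definite. Assume (N) admits a minimizer and (γ_1, γ_2, 1) ∈ int{{(E_μ^Ω[ω], E_μ^Ω[ω²], E_μ^Ω[1]) : μ a non-negative finite Borel measure on Ω} + ℝ_+² × {0}}. Then min(N) = max(N1). -/
open MeasureTheory Matrix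
open scoped BigOperators

noncomputable section

/-- The value set of the Newsvendor moment problem (N) with mean and
second-moment bounds over `Ω = [ω̲, ω̄]`. -/
def NewsVals (ωlo ωhi x γ1 γ2 : ℝ) : Set ℝ :=
  {val | ∃ μ : Measure ℝ, IsProbabilityMeasure μ ∧ μ (Set.Icc ωlo ωhi)ᶜ = 0 ∧
    (∫ ω, ω ∂μ) ≤ γ1 ∧ (∫ ω, ω ^ 2 ∂μ) ≤ γ2 ∧
    val = ∫ ω, min (x - ω) 0 ∂μ}

/-- The value set of the SDP (N1). -/
def NewsSDPVals (ωlo ωhi x γ1 γ2 : ℝ) : Set ℝ :=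
  {val | ∃ (lam1 lam2 lam3 : ℝ) (Z Z' : Matrix (Fin 2) (Fin 2) ℝ),
    0 ≤ lam1 ∧ 0 ≤ lam2 ∧ Z.PosSemidef ∧ Z'.PosSemidef ∧
    (!![x + lam3 - (Z * !![-ωlo, 0; 0, ωhi]).trace,
        (1 / 2) * (-1 + lam1 - (Z * !![(1:ℝ), 0; 0, -1]).trace);
        (1 / 2) * (-1 + lam1 - (Z * !![(1:ℝ), 0; 0, -1]).trace),
        lam2]).PosSemidef ∧
    (!![lam3 - (Z' * !![-ωlo, 0; 0, ωhi]).trace,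
        (1 / 2) * (lam1 - (Z' * !![(1:ℝ), 0; 0, -1]).trace);
        (1 / 2) * (lam1 - (Z' * !![(1:ℝ), 0; 0, -1]).trace),
        lam2]).PosSemidef ∧
    val = -lam1 * γ1 - lam2 * γ2 - lam3}

lemma nv_psd_iff (a b c : ℝ) : (!![a, b; b, c]).PosSemidef ↔
    ∀ u v : ℝ, 0 ≤ a * u ^ 2 + 2 * b * u * v + c * v ^ 2 := by
  rw [Matrix.posSemidef_iff_dotProduct_mulVec]
  constructor
  · rintro ⟨-, h⟩ u v
    have := h ![u, v]
    simp [Matrix.mulVec, dotProduct, Fin.sum_univ_two] at this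
    nlinarith
  · intro h
    refine ⟨?_, fun w => ?_⟩
    · ext i j
      fin_cases i <;> fin_cases j <;> simp [Matrix.conjTranspose_apply]
    · have := h (w 0) (w 1)
      simp [Matrix.mulVec, dotProduct, Fin.sum_univ_two]
      nlinarith

lemma nv_psd_of (a b c : ℝ) (hc : 0 ≤ c) (h : ∀ t : ℝ, 0 ≤ a + 2 * b * t + c * t ^ 2) :
    (!![a, b; b, c]).PosSemidef := by
  rw [nv_psd_iff]
  intro u v
  by_cases hu : u = 0
  · subst hu
    have := mul_nonneg hc (sq_nonneg v)
    nlinarith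
  · have h1 := mul_nonneg (sq_nonneg u) (h (v / u))
    have h2 : u ^ 2 * (a + 2 * b * (v / u) + c * (v / u) ^ 2)
        = a * u ^ 2 + 2 * b * u * v + c * v ^ 2 := by
      field_simp
    rwa [h2] at h1

lemma nv_tr0 (Z : Matrix (Fin 2) (Fin 2) ℝ) (a b : ℝ) :
    (Z * !![a, 0; 0, b]).trace = Z 0 0 * a + Z 1 1 * b := by
  simp [Matrix.trace, Fin.sum_univ_two, Matrix.mul_apply]

/-- S-lemma for a convex quadratic on an interval. -/
lemma nv_slemma (lo hi a b c : ℝ) (hc : 0 ≤ c) (hlt : lo < hi)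
    (h : ∀ v ∈ Set.Icc lo hi, 0 ≤ a + b * v + c * v ^ 2) :
    ∃ Z : Matrix (Fin 2) (Fin 2) ℝ, Z.PosSemidef ∧
      (!![a - (Z * !![-lo, 0; 0, hi]).trace,
        (1 / 2) * (b - (Z * !![(1:ℝ), 0; 0, -1]).trace);
        (1 / 2) * (b - (Z * !![(1:ℝ), 0; 0, -1]).trace), c]).PosSemidef := by
  suffices H : ∃ z1 z2 : ℝ, 0 ≤ z1 ∧ 0 ≤ z2 ∧ ∀ t : ℝ,
      0 ≤ a + b * t + c * t ^ 2 - z1 * (t - lo) - z2 * (hi - t) by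
    obtain ⟨z1, z2, h1, h2, H⟩ := H
    refine ⟨!![z1, 0; 0, z2], ?_, ?_⟩
    · rw [nv_psd_iff]
      intro u v
      have := mul_nonneg h1 (sq_nonneg u)
      have := mul_nonneg h2 (sq_nonneg v)
      linarith
    · refine nv_psd_of _ _ _ hc fun t => ?_
      rw [nv_tr0, nv_tr0]
      have := H t
      simp
      linarith
  have hlo := h lo ⟨le_rfl, hlt.le⟩
  have hhi := h hi ⟨hlt.le, le_rfl⟩
  by_cases c1 : 0 ≤ b + 2 * c * lo
  · refine ⟨b + 2 * c * lo, 0, c1, le_rfl, fun t => ?_⟩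
    have := mul_nonneg hc (sq_nonneg (t - lo))
    nlinarith
  by_cases c2 : b + 2 * c * hi ≤ 0
  · refine ⟨0, -(b + 2 * c * hi), le_rfl, by linarith, fun t => ?_⟩
    have := mul_nonneg hc (sq_nonneg (t - hi))
    nlinarith
  push Not at c1 c2
  have hc' : 0 < c := by
    rcases hc.lt_or_eq with h | h
    · exact h
    · subst h; linarith
  refine ⟨0, 0, le_rfl, le_rfl, fun t => ?_⟩
  have hv := h (-b / (2 * c)) ⟨by rw [le_div_iff₀ (by positivity)]; linarith,
    by rw [div_le_iff₀ (by positivity)]; linarith⟩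
  have := mul_nonneg hc (sq_nonneg (t - -b / (2 * c)))
  have e : c * (-b / (2 * c)) = -b / 2 := by field_simp
  generalize -b / (2 * c) = w at *
  have hb : b = -2 * (c * w) := by linarith
  subst hb
  nlinarith

lemma nv_integrable {lo hi : ℝ} {μ : Measure ℝ} [IsFiniteMeasure μ]
    (hμ : μ (Set.Icc lo hi)ᶜ = 0) {f : ℝ → ℝ} (hf : Continuous f) : Integrable f μ := by
  have h1 : IntegrableOn f (Set.Icc lo hi) μ := hf.continuousOn.integrableOn_compact isCompact_Icc
  have h2 : μ.restrict (Set.Icc lo hi) = μ := by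
    apply Measure.restrict_eq_self_of_ae_mem
    exact hμ
  rwa [IntegrableOn, h2] at h1

/-- The cone of moments, with slacks, including the objective. -/
def NvA (lo hi x : ℝ) : Set (ℝ × ℝ × ℝ × ℝ) :=
  {q | ∃ μ : Measure ℝ, IsFiniteMeasure μ ∧ μ (Set.Icc lo hi)ᶜ = 0 ∧
    (∫ ω, ω ∂μ) ≤ q.1 ∧ (∫ ω, ω ^ 2 ∂μ) ≤ q.2.1 ∧ q.2.2.1 = (μ Set.univ).toReal ∧
    (∫ ω, min (x - ω) 0 ∂μ) ≤ q.2.2.2}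

lemma nv_cont (x : ℝ) : Continuous (fun ω : ℝ => min (x - ω) 0) := by fun_prop

lemma nvA_add {lo hi x : ℝ} {q r : ℝ × ℝ × ℝ × ℝ} (hq : q ∈ NvA lo hi x)
    (hr : r ∈ NvA lo hi x) : q + r ∈ NvA lo hi x := by
  obtain ⟨μ, hμf, hμ, m1, m2, m3, m4⟩ := hq
  obtain ⟨ν, hνf, hν, n1, n2, n3, n4⟩ := hr
  refine ⟨μ + ν, inferInstance, by simp [hμ, hν], ?_, ?_, ?_, ?_⟩
  · rw [integral_add_measure (nv_integrable hμ (by fun_prop)) (nv_integrable hν (by fun_prop))]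
    exact add_le_add m1 n1
  · rw [integral_add_measure (nv_integrable hμ (by fun_prop)) (nv_integrable hν (by fun_prop))]
    exact add_le_add m2 n2
  · rw [Measure.add_apply, ENNReal.toReal_add (measure_ne_top _ _) (measure_ne_top _ _)]
    simp [m3, n3]
  · rw [integral_add_measure (nv_integrable hμ (nv_cont x)) (nv_integrable hν (nv_cont x))]
    exact add_le_add m4 n4

lemma nvA_smul {lo hi x : ℝ} {q : ℝ × ℝ × ℝ × ℝ} (hq : q ∈ NvA lo hi x)
    {t : ℝ} (ht : 0 ≤ t) : t • q ∈ NvA lo hi x := by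
  obtain ⟨μ, hμf, hμ, m1, m2, m3, m4⟩ := hq
  refine ⟨ENNReal.ofReal t • μ, Measure.smul_finite μ ENNReal.ofReal_ne_top,
    by simp [hμ], ?_, ?_, ?_, ?_⟩
  · rw [integral_smul_measure, ENNReal.toReal_ofReal ht]
    exact mul_le_mul_of_nonneg_left m1 ht
  · rw [integral_smul_measure, ENNReal.toReal_ofReal ht]
    exact mul_le_mul_of_nonneg_left m2 ht
  · simp [m3, ht]
  · rw [integral_smul_measure, ENNReal.toReal_ofReal ht]
    exact mul_le_mul_of_nonneg_left m4 ht

lemma nvA_convex (lo hi x : ℝ) : Convex ℝ (NvA lo hi x) := by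
  intro q hq r hr a b ha hb _
  exact nvA_add (nvA_smul hq ha) (nvA_smul hr hb)

lemma nv_dec (f : StrongDual ℝ (ℝ × ℝ × ℝ × ℝ)) (a b c d : ℝ) :
    f (a, b, c, d) = a * f (1, 0, 0, 0) + b * f (0, 1, 0, 0) + c * f (0, 0, 1, 0)
      + d * f (0, 0, 0, 1) := by
  have : ((a, b, c, d) : ℝ × ℝ × ℝ × ℝ) = a • (1, 0, 0, 0) + b • (0, 1, 0, 0)
      + c • (0, 0, 1, 0) + d • (0, 0, 0, 1) := by simp
  rw [this]
  simp only [map_add, map_smul, smul_eq_mul]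

/-- Weak duality. -/
lemma nv_weak (lo hi x γ1 γ2 p l1 l2 l3 : ℝ) (h1 : 0 ≤ l1) (h2 : 0 ≤ l2)
    (h : ∀ ω ∈ Set.Icc lo hi, 0 ≤ min (x - ω) 0 + (l1 * ω + l2 * ω ^ 2 + l3))
    (hp : p ∈ NewsVals lo hi x γ1 γ2) : -l1 * γ1 - l2 * γ2 - l3 ≤ p := by
  obtain ⟨μ, hμp, hμ, m1, m2, rfl⟩ := hp
  have hae : ∀ᵐ ω ∂μ, 0 ≤ min (x - ω) 0 + (l1 * ω + l2 * ω ^ 2 + l3) := by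
    have : ∀ᵐ ω ∂μ, ω ∈ Set.Icc lo hi := hμ
    filter_upwards [this] with ω hω using h ω hω
  have hI := integral_nonneg_of_ae hae
  rw [integral_add (nv_integrable hμ (nv_cont x)) (nv_integrable hμ (by fun_prop)),
    integral_add (nv_integrable hμ (by fun_prop)) (nv_integrable hμ (by fun_prop)),
    integral_add (nv_integrable hμ (by fun_prop)) (nv_integrable hμ (by fun_prop)),
    integral_const_mul, integral_const_mul] at hI
  simp at hI
  have := mul_le_mul_of_nonneg_left m1 h1
  have := mul_le_mul_of_nonneg_left m2 h2
  linarith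

/-- Exact SDP reformulation of the single-product Newsvendor
moment problem with mean and second-moment bounds: `min (N) = max (N1)`. -/
theorem newsvendor_sdp_duality (ωlo ωhi x γ1 γ2 : ℝ)
    (h0 : 0 ≤ ωlo) (hlt : ωlo < ωhi)
    (hint : ((γ1, γ2, (1 : ℝ)) : ℝ × ℝ × ℝ) ∈ interior
      {q : ℝ × ℝ × ℝ | ∃ μ : Measure ℝ, IsFiniteMeasure μ ∧
        μ (Set.Icc ωlo ωhi)ᶜ = 0 ∧ ∃ s1 s2 : ℝ, 0 ≤ s1 ∧ 0 ≤ s2 ∧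
        q.1 = (∫ ω, ω ∂μ) + s1 ∧ q.2.1 = (∫ ω, ω ^ 2 ∂μ) + s2 ∧
        q.2.2 = (μ Set.univ).toReal})
    (p : ℝ) (hmin : IsLeast (NewsVals ωlo ωhi x γ1 γ2) p) :
    IsGreatest (NewsSDPVals ωlo ωhi x γ1 γ2) p := by
  have hp := hmin.1
  constructor
  · obtain ⟨μ, hμp, hμ, m1, m2, mp⟩ := hp
    have hptA : ((γ1, γ2, 1, p) : ℝ × ℝ × ℝ × ℝ) ∈ NvA ωlo ωhi x :=
      ⟨μ, inferInstance, hμ, m1, m2, by simp, mp.ge⟩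
    have hp0 : p ≤ 0 := by
      rw [mp]; exact integral_nonpos fun ω => min_le_right _ _
    have hni : ((γ1, γ2, 1, p) : ℝ × ℝ × ℝ × ℝ) ∉ interior (NvA ωlo ωhi x) := by
      intro hmem
      have hc : Continuous (fun t : ℝ => ((γ1, γ2, 1, t) : ℝ × ℝ × ℝ × ℝ)) := by fun_prop
      have ho := isOpen_interior.preimage hc (t := interior (NvA ωlo ωhi x))
      obtain ⟨ε, hε, hb⟩ := Metric.isOpen_iff.1 ho p hmem
      have hm : p - ε / 2 ∈ Metric.ball p ε := by
        rw [Metric.mem_ball, Real.dist_eq, abs_lt]; constructor <;> linarith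
      obtain ⟨ν, hνf, hν, n1, n2, n3, n4⟩ := interior_subset (hb hm)
      have hprob : IsProbabilityMeasure ν := ⟨by
        have := (ENNReal.toReal_eq_one_iff _).1 n3.symm
        exact this⟩
      have := hmin.2 ⟨ν, hprob, hν, n1, n2, rfl⟩
      simp only at n4
      linarith
    have hin : ((γ1, γ2, 1, 1) : ℝ × ℝ × ℝ × ℝ) ∈ interior (NvA ωlo ωhi x) := by
      rw [mem_interior] at hint ⊢
      obtain ⟨U, hU, hUo, hUm⟩ := hint
      refine ⟨{q | (q.1, q.2.1, q.2.2.1) ∈ U ∧ 0 < q.2.2.2}, ?_, ?_, ⟨hUm, one_pos⟩⟩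
      · rintro ⟨a, b, c, d⟩ ⟨hq, hd⟩
        obtain ⟨ν, hνf, hν, s1, s2, hs1, hs2, e1, e2, e3⟩ := hU hq
        simp only at e1 e2 e3 hd
        refine ⟨ν, hνf, hν, ?_, ?_, e3, ?_⟩
        · simp only; linarith
        · simp only; linarith
        · exact le_trans (integral_nonpos fun ω => min_le_right _ _) hd.le
      · apply IsOpen.inter
        · exact hUo.preimage (f := fun q : ℝ × ℝ × ℝ × ℝ => (q.1, q.2.1, q.2.2.1)) (by fun_prop)
        · exact isOpen_lt (f := fun _ : ℝ × ℝ × ℝ × ℝ => (0 : ℝ)) (g := fun q => q.2.2.2)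
            continuous_const (by fun_prop)
    obtain ⟨f, hf⟩ := geometric_hahn_banach_open_point (nvA_convex ωlo ωhi x).interior
      isOpen_interior hni
    have hle : ∀ q ∈ NvA ωlo ωhi x, f q ≤ f (γ1, γ2, 1, p) := by
      intro q hq
      have hq' : q ∈ closure (interior (NvA ωlo ωhi x)) := by
        rw [(nvA_convex ωlo ωhi x).closure_interior_eq_closure_of_nonempty_interior ⟨_, hin⟩]
        exact subset_closure hq
      exact closure_minimal (fun a ha => (hf a ha).le)
        (isClosed_le f.continuous continuous_const) hq'
    have hle0 : ∀ q ∈ NvA ωlo ωhi x, f q ≤ 0 := by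
      intro q hq
      by_contra! hpos
      have h1 := hle _ (nvA_smul hq (t := (|f (γ1, γ2, 1, p)| + 1) / f q) (by positivity))
      rw [map_smul, smul_eq_mul, div_mul_cancel₀ _ hpos.ne'] at h1
      linarith [le_abs_self (f (γ1, γ2, 1, p))]
    have hz : f (γ1, γ2, 1, p) = 0 := by
      apply le_antisymm (hle0 _ hptA)
      have h1 := hle _ (nvA_smul hptA (le_refl 0))
      simpa only [zero_smul, map_zero] using h1
    have hd := hf _ hin
    rw [nv_dec] at hz hd
    rw [nv_dec f γ1 γ2 1 p] at hd
    have hdir : ∀ ω ∈ Set.Icc ωlo ωhi, ∀ s1 s2 : ℝ, 0 ≤ s1 → 0 ≤ s2 →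
        f (ω + s1, ω ^ 2 + s2, 1, min (x - ω) 0) ≤ 0 := by
      intro ω hω s1 s2 hs1 hs2
      apply hle0
      refine ⟨Measure.dirac ω, inferInstance, ?_, ?_, ?_, ?_, ?_⟩
      · rw [Measure.dirac_apply' _ measurableSet_Icc.compl]
        simp [hω.1, hω.2]
      · simp [hs1]
      · simp [hs2]
      · simp
      · simp
    have hs : ∀ s1 s2 : ℝ, 0 ≤ s1 → 0 ≤ s2 → f (s1, s2, 0, 0) ≤ 0 := by
      intro s1 s2 hs1 hs2
      apply hle0
      exact ⟨0, inferInstance, by simp, by simpa, by simpa, by simp, by simp⟩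
    have ha := hs 1 0 zero_le_one le_rfl
    have hb := hs 0 1 le_rfl zero_le_one
    have hdir0 : ∀ ω ∈ Set.Icc ωlo ωhi, ω * f (1, 0, 0, 0) + ω ^ 2 * f (0, 1, 0, 0)
        + f (0, 0, 1, 0) + min (x - ω) 0 * f (0, 0, 0, 1) ≤ 0 := by
      intro ω hω
      have := hdir ω hω 0 0 le_rfl le_rfl
      rw [nv_dec] at this
      linarith
    generalize f (1, 0, 0, 0) = A at *
    generalize f (0, 1, 0, 0) = B at *
    generalize f (0, 0, 1, 0) = C at *
    generalize f (0, 0, 0, 1) = D at *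
    have hD : D < 0 := by
      by_contra! hD
      nlinarith
    have key : ∀ ω ∈ Set.Icc ωlo ωhi,
        0 ≤ min (x - ω) 0 + (A / D * ω + B / D * ω ^ 2 + C / D) := by
      intro ω hω
      have h1 := div_nonneg_of_nonpos (hdir0 ω hω) hD.le
      have h2 : (ω * A + ω ^ 2 * B + C + min (x - ω) 0 * D) / D
          = min (x - ω) 0 + (A / D * ω + B / D * ω ^ 2 + C / D) := by
        field_simp [hD.ne]
        ring
      rwa [h2] at h1
    have hl2 : 0 ≤ B / D := div_nonneg_of_nonpos hb hD.le
    obtain ⟨Z, hZ, hZ'⟩ := nv_slemma ωlo ωhi (x + C / D) (-1 + A / D) (B / D) hl2 hlt (by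
      intro v hv
      have := key v hv
      have := min_le_left (x - v) 0
      linarith)
    obtain ⟨W, hW, hW'⟩ := nv_slemma ωlo ωhi (C / D) (A / D) (B / D) hl2 hlt (by
      intro v hv
      have := key v hv
      have := min_le_right (x - v) 0
      linarith)
    refine ⟨A / D, B / D, C / D, Z, W, div_nonneg_of_nonpos ha hD.le, hl2, hZ, hW, hZ', hW', ?_⟩
    have := hD.ne
    field_simp
    linarith
  · rintro v ⟨l1, l2, l3, Z, Z', h1, h2, hZ, hZ', hP, hP', rfl⟩
    refine nv_weak ωlo ωhi x γ1 γ2 p l1 l2 l3 h1 h2 (fun ω hω => ?_) hp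
    have a1 := (nv_psd_iff _ _ _).1 hP 1 ω
    have a2 := (nv_psd_iff _ _ _).1 hP' 1 ω
    rw [nv_tr0, nv_tr0] at a1 a2
    have b1 := mul_nonneg (hZ.diag_nonneg (i := 0)) (sub_nonneg.2 hω.1)
    have b2 := mul_nonneg (hZ.diag_nonneg (i := 1)) (sub_nonneg.2 hω.2)
    have b3 := mul_nonneg (hZ'.diag_nonneg (i := 0)) (sub_nonneg.2 hω.1)
    have b4 := mul_nonneg (hZ'.diag_nonneg (i := 1)) (sub_nonneg.2 hω.2)
    rcases min_choice (x - ω) 0 with e | e <;> rw [e] <;> linarith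

end
end
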